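/- arXiv:2106.11372 — 9 statements merged into one kernel-verified Lean document; each statement's English description precedes it below -/
import Mathlib

section
/- Let ℓ ≥ 2 be a real parameter. For every LBUBFL instance with uniform bounds and every feasible fractional LP solution (x*, y*), there exist F' ⊆ F and σ : C → F' such that (1 − 1/ℓ)·L ≤ |σ⁻¹(i)| ≤ (2 − 1/ℓ)·U for every i ∈ F', and Σ_{i ∈ F'} f i + Σ_{j ∈ C} dist(j, σ(j)) ≤ (10ℓ + 4)·LPcost(x*, y*). -/
/-!
Put `m = ⌈(1 - 1/ℓ) L⌉` and `w = ⌊(1 - 1/ℓ) U⌋`. By Markov's inequality and the lower bound in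
the linear program, each facility `i` has `m` clients within a radius `ρ i` that is paid for, up
to a factor of order `ℓ`, by the fractional connection cost at `i`. Raise the opening cost of `i`
by `2 (m - 1) ρ i` and forget the lower bounds.

What remains is capacitated facility location. Filtering the clients by average distance gives
cheap hubs with one near every client. Round the assignment by the integrality of the
transportation polytope (Birkhoff's theorem), charging for a detour through the nearest hub. With
these charges clients can be moved between facilities that share a hub until at most one of them
is partially filled, and a facility with at most `w` clients can be closed in favour of its hub,
which then receives at most `w` further clients: all loads are at most `U + w ≤ (2 - 1/ℓ) U`.

Finally restore the lower bound `m`. Give every facility of a maximal family with disjoint balls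
`m` clients, stealing from its ball. Any other underfull facility is near one of these; the two
either fit into one facility or have at least `2 m` clients to share. The raised opening costs
pay for these moves.
-/

open Finset

namespace LBUBFL

section WeightedSums

variable {ι 𝕜 : Type*} [Field 𝕜] [LinearOrder 𝕜] [IsStrictOrderedRing 𝕜]
  {s : Finset ι} {d w : ι → 𝕜} {t : 𝕜}

theorem mul_sum_filter_lt_lt_sum_mul (hd : ∀ i ∈ s, 0 ≤ d i) (hw : ∀ i ∈ s, 0 ≤ w i)
    (hpos : 0 < ∑ i ∈ s with t < d i, w i) :
    t * ∑ i ∈ s with t < d i, w i < ∑ i ∈ s, d i * w i := by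
  have hw' : ∀ i ∈ s.filter (t < d ·), 0 ≤ w i := fun i hi => hw i (mem_of_mem_filter i hi)
  obtain ⟨k, hk, hwk⟩ := (sum_pos_iff_of_nonneg hw').1 hpos
  calc t * ∑ i ∈ s with t < d i, w i
      = ∑ i ∈ s with t < d i, t * w i := mul_sum ..
    _ < ∑ i ∈ s with t < d i, d i * w i :=
        sum_lt_sum (fun i hi => mul_le_mul_of_nonneg_right (mem_filter.1 hi).2.le (hw' i hi))
          ⟨k, hk, mul_lt_mul_of_pos_right (mem_filter.1 hk).2 hwk⟩
    _ ≤ ∑ i ∈ s, d i * w i :=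
        sum_le_sum_of_subset_of_nonneg (filter_subset ..)
          fun i hi _ => mul_nonneg (hd i hi) (hw i hi)

theorem half_le_sum_filter_le_two_mul (hd : ∀ i ∈ s, 0 ≤ d i) (hw : ∀ i ∈ s, 0 ≤ w i)
    (hsum : ∑ i ∈ s, w i = 1) :
    1 / 2 ≤ ∑ i ∈ s with d i ≤ 2 * ∑ k ∈ s, d k * w k, w i := by
  set μ := ∑ k ∈ s, d k * w k
  have hμ : 0 ≤ μ := sum_nonneg fun i hi => mul_nonneg (hd i hi) (hw i hi)
  by_contra! hnear
  have hsplit := sum_filter_add_sum_filter_not s (d · ≤ 2 * μ) w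
  simp only [not_le] at hsplit
  have hfar : 1 / 2 < ∑ i ∈ s with 2 * μ < d i, w i := by linarith
  have hmarkov := mul_sum_filter_lt_lt_sum_mul hd hw (by linarith)
  nlinarith [mul_le_mul_of_nonneg_left hfar.le hμ]

theorem exists_mul_sum_le_sum_mul (hs : s.Nonempty) (hw : ∀ i ∈ s, 0 ≤ w i) :
    ∃ i ∈ s, d i * ∑ k ∈ s, w k ≤ ∑ k ∈ s, d k * w k := by
  obtain ⟨i, hi, hmin⟩ := exists_min_image s d hs
  refine ⟨i, hi, ?_⟩
  rw [mul_sum]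
  exact sum_le_sum fun k hk => mul_le_mul_of_nonneg_right (hmin k hk) (hw k hk)

end WeightedSums

section Load

variable {α β : Type*} [DecidableEq β] {C : Finset α} {σ : α → β}

/-- The number of clients in `C` that the assignment `σ` sends to the facility `i`. -/
def load (C : Finset α) (σ : α → β) (i : β) : ℕ := #{j ∈ C | σ j = i}

theorem load_pos {j : α} (hj : j ∈ C) : 0 < load C σ (σ j) :=
  card_pos.2 ⟨j, mem_filter.2 ⟨hj, rfl⟩⟩

theorem sum_comp_eq_sum_load_mul {F : Finset β} (hσ : ∀ j ∈ C, σ j ∈ F) (φ : β → ℝ) :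
    ∑ j ∈ C, φ (σ j) = ∑ i ∈ F, load C σ i * φ i := by
  rw [← sum_fiberwise_of_maps_to hσ]
  refine sum_congr rfl fun i _ => ?_
  rw [sum_congr rfl fun j hj => by rw [(mem_filter.1 hj).2], sum_const, nsmul_eq_mul, load]

theorem load_fst_le {u : β → ℕ} {slot : α → Σ _ : β, ℕ} (hinj : Set.InjOn slot C)
    (hslot : ∀ j ∈ C, (slot j).2 < u (slot j).1) (i : β) :
    load C (fun j => (slot j).1) i ≤ u i := by
  refine (card_le_card_of_injOn (fun j => (slot j).2) ?_ ?_).trans_eq (card_range (u i))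
  · intro j hj
    obtain ⟨hjC, rfl⟩ := mem_filter.1 hj
    exact mem_coe.2 (mem_range.2 (hslot j hjC))
  · intro j hj k hk hjk
    obtain ⟨hjC, rfl⟩ := mem_filter.1 hj
    obtain ⟨hkC, hkj⟩ := mem_filter.1 hk
    exact hinj hjC hkC (Sigma.ext hkj.symm (heq_of_eq hjk))

end Load

section Transportation

variable {𝕜 : Type*} [Field 𝕜] [LinearOrder 𝕜] [IsStrictOrderedRing 𝕜]

theorem exists_perm_sum_le_of_mem_doublyStochastic {n : Type*} [Fintype n] [DecidableEq n]
    {M : Matrix n n 𝕜} (hM : M ∈ doublyStochastic 𝕜 n) (c : n → n → 𝕜) :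
    ∃ π : Equiv.Perm n, (∀ s, 0 < M s (π s)) ∧
      ∑ s, c s (π s) ≤ ∑ s, ∑ t, M s t * c s t := by
  obtain ⟨w, hw, hw1, rfl⟩ := exists_eq_sum_perm_of_mem_doublyStochastic hM
  set M := ∑ π, w π • Equiv.Perm.permMatrix 𝕜 π
  have hentry (s t : n) : M s t = ∑ π : Equiv.Perm n, if π s = t then w π else 0 := by
    simp [M, Matrix.sum_apply, Equiv.Perm.permMatrix, PEquiv.toMatrix_apply]
  have hcost : ∑ s, ∑ t, M s t * c s t = ∑ π, w π * ∑ s, c s (π s) := by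
    have hrow (s : n) : ∑ t, M s t * c s t = ∑ π, w π * c s (π s) := by
      simp_rw [hentry, sum_mul]
      rw [sum_comm]
      simp
    simp_rw [hrow, mul_sum]
    exact sum_comm
  obtain ⟨π, hπ, hle⟩ : ∃ π, 0 < w π ∧ ∑ s, c s (π s) ≤ ∑ s, ∑ t, M s t * c s t := by
    by_contra! hlt
    obtain ⟨π, -, hπ⟩ := (sum_pos_iff_of_nonneg fun π _ => hw π).1 (hw1 ▸ zero_lt_one)
    refine lt_irrefl (∑ s, ∑ t, M s t * c s t) ?_
    calc ∑ s, ∑ t, M s t * c s t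
        = ∑ π, w π * ∑ s, ∑ t, M s t * c s t := by rw [← sum_mul, hw1, one_mul]
      _ < ∑ π, w π * ∑ s, c s (π s) := by
          refine sum_lt_sum (fun π _ => ?_) ⟨π, mem_univ π, mul_lt_mul_of_pos_left (hlt π hπ) hπ⟩
          rcases (hw π).eq_or_lt with h | h
          · simp [← h]
          · exact (mul_lt_mul_of_pos_left (hlt π h) h).le
      _ = ∑ s, ∑ t, M s t * c s t := hcost.symm
  refine ⟨π, fun s => ?_, hle⟩
  rw [hentry]
  exact (sum_pos_iff_of_nonneg fun π' _ => by split_ifs <;> simp [hw]).2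
    ⟨π, mem_univ π, by simpa using hπ⟩

theorem exists_embedding_sum_le {ι κ : Type*} [Fintype ι] [Fintype κ] {p : ι → κ → 𝕜}
    (hp : ∀ i k, 0 ≤ p i k) (hrow : ∀ i, ∑ k, p i k = 1) (hcol : ∀ k, ∑ i, p i k ≤ 1)
    (c : ι → κ → 𝕜) :
    ∃ e : ι ↪ κ, ∑ i, c i (e i) ≤ ∑ i, ∑ k, p i k * c i k := by
  classical
  -- The symmetric dilation of `p` is doubly stochastic, and its support forces `ι` into `κ`.
  let M : Matrix (ι ⊕ κ) (ι ⊕ κ) 𝕜 :=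
    Matrix.fromBlocks 0 (Matrix.of p) (Matrix.of p).transpose
      (Matrix.diagonal fun k => 1 - ∑ i, p i k)
  have hsymm : M.transpose = M := by
    simp [M, Matrix.fromBlocks_transpose]
  have hsum : ∀ s, ∑ t, M s t = 1 := by
    rintro (i | k)
    · simp [M, hrow]
    · simp [M, Matrix.diagonal_apply]
  have hM : M ∈ doublyStochastic 𝕜 (ι ⊕ κ) := by
    refine mem_doublyStochastic_iff_sum.2 ⟨?_, hsum, fun t => ?_⟩
    · rintro (i | k) (i' | k')
      · simp [M]
      · simp [M, hp]
      · simp [M, hp]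
      · by_cases h : k = k' <;> simp [M, h, hcol]
    · rw [← hsum t]
      exact sum_congr rfl fun s _ => congrFun₂ hsymm t s
  obtain ⟨π, hπ, hle⟩ := exists_perm_sum_le_of_mem_doublyStochastic hM
    (Sum.elim (fun i => Sum.elim 0 (c i)) 0)
  have hright (i : ι) : ∃ k, π (.inl i) = .inr k := by
    have := hπ (.inl i)
    rcases h : π (.inl i) with i' | k
    · simp [h, M] at this
    · exact ⟨k, rfl⟩
  choose e he using hright
  have he_inj : e.Injective := fun i i' h =>
    Sum.inl_injective (π.injective (by rw [he, he, h]))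
  exact ⟨⟨e, he_inj⟩, by simpa [M, he] using hle⟩

section Slots

variable {α β : Type*} {F : Finset β} {C : Finset α} {u : β → ℕ} {x : β → α → 𝕜}

-- Facility `i` is split into the `u i` unit-capacity slots `⟨i, 0⟩, …, ⟨i, u i - 1⟩`.
theorem exists_slot_embedding_sum_le (hx : ∀ i ∈ F, ∀ j ∈ C, 0 ≤ x i j)
    (hsum : ∀ j ∈ C, ∑ i ∈ F, x i j = 1) (hcap : ∀ i ∈ F, ∑ j ∈ C, x i j ≤ u i)
    (c : α → β → 𝕜) :
    ∃ e : C ↪ (F.sigma fun i => range (u i) : Finset (Σ _ : β, ℕ)),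
      ∑ j : C, c j (e j).1.1 ≤ ∑ j ∈ C, ∑ i ∈ F, x i j * c j i := by
  let slots : Finset (Σ _ : β, ℕ) := F.sigma fun i => range (u i)
  have hmem (k : slots) : k.1.1 ∈ F := (mem_sigma.1 k.2).1
  have hshare (i : β) (hi : i ∈ F) (j : α) (hj : j ∈ C) : u i * (x i j / u i) = x i j := by
    refine mul_div_cancel_of_imp' fun hu => ?_
    have hle := (single_le_sum (hx i hi) hj).trans (hcap i hi)
    exact le_antisymm (hle.trans_eq hu) (hx i hi j hj)
  have hsplit (φ : β → 𝕜) : ∑ k : slots, φ k.1.1 = ∑ i ∈ F, u i * φ i := by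
    rw [sum_coe_sort slots fun k => φ k.1, sum_sigma]
    simp
  obtain ⟨e, he⟩ := exists_embedding_sum_le
    (p := fun (j : C) (k : slots) => x k.1.1 j / u k.1.1)
    (fun j k => div_nonneg (hx _ (hmem k) _ j.2) (Nat.cast_nonneg _))
    (fun j => by
      rw [hsplit fun i => x i j / u i, sum_congr rfl fun i hi => hshare i hi j j.2, hsum j j.2])
    (fun k => by
      rw [← sum_div, sum_coe_sort C fun j => x k.1.1 j]
      exact div_le_one_of_le₀ (hcap _ (hmem k)) (Nat.cast_nonneg _))
    (fun j k => c j k.1.1)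
  refine ⟨e, he.trans_eq ?_⟩
  rw [← sum_coe_sort C]
  refine sum_congr rfl fun j _ => (hsplit fun i => x i j / u i * c j i).trans ?_
  exact sum_congr rfl fun i hi => by rw [← mul_assoc, hshare i hi j j.2]

theorem exists_integral_transportation [DecidableEq β] [Nonempty β]
    (hx : ∀ i ∈ F, ∀ j ∈ C, 0 ≤ x i j) (hsum : ∀ j ∈ C, ∑ i ∈ F, x i j = 1)
    (hcap : ∀ i ∈ F, ∑ j ∈ C, x i j ≤ u i) (c : α → β → 𝕜) :
    ∃ σ : α → β, (∀ j ∈ C, σ j ∈ F) ∧ (∀ i, load C σ i ≤ u i) ∧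
      ∑ j ∈ C, c j (σ j) ≤ ∑ j ∈ C, ∑ i ∈ F, x i j * c j i := by
  classical
  obtain ⟨e, he⟩ := exists_slot_embedding_sum_le hx hsum hcap c
  let slot (j : α) : Σ _ : β, ℕ := if h : j ∈ C then e ⟨j, h⟩ else ⟨Classical.arbitrary β, 0⟩
  have hslot (j : C) : slot j = e j := dif_pos j.2
  have hmem (j : α) (hj : j ∈ C) : (slot j).1 ∈ F ∧ (slot j).2 ∈ range (u (slot j).1) :=
    mem_sigma.1 (hslot ⟨j, hj⟩ ▸ (e ⟨j, hj⟩).2)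
  have hinj : Set.InjOn slot C := fun j hj k hk h => by
    rw [hslot ⟨j, hj⟩, hslot ⟨k, hk⟩] at h
    exact congrArg Subtype.val (e.injective (Subtype.ext h))
  refine ⟨fun j => (slot j).1, fun j hj => (hmem j hj).1,
    load_fst_le hinj fun j hj => mem_range.1 (hmem j hj).2, le_of_eq_of_le ?_ he⟩
  rw [← sum_coe_sort C]
  exact sum_congr rfl fun j _ => by simp only [hslot]

end Slots

end Transportation

section Reassign

variable {α β : Type*} [DecidableEq α] {σ : α → β} {Q : Finset α} {b : β} {j : α}

/-- The assignment that agrees with `σ`, except that all clients in `Q` are sent to `b`. -/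
def reassign (σ : α → β) (Q : Finset α) (b : β) : α → β := Q.piecewise (fun _ => b) σ

theorem reassign_of_mem (hj : j ∈ Q) : reassign σ Q b j = b :=
  piecewise_eq_of_mem _ _ _ hj

theorem reassign_of_notMem (hj : j ∉ Q) : reassign σ Q b j = σ j :=
  piecewise_eq_of_notMem _ _ _ hj

end Reassign

section Assignments

variable {α β : Type*} [DecidableEq β] {F : Finset β} {C : Finset α} {U : ℕ} {σ : α → β}

/-- `σ` sends every client in `C` to a facility in `F` without exceeding the uniform
capacity `U`; its values outside `C` are irrelevant. -/
structure IsAssignment (F : Finset β) (C : Finset α) (U : ℕ) (σ : α → β) : Prop where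
  mem : ∀ j ∈ C, σ j ∈ F
  load_le : ∀ i ∈ F, load C σ i ≤ U

section ReassignLoad

variable [DecidableEq α] {Q : Finset α} {a b i : β}

theorem load_reassign_source_add_card (hQ : Q ⊆ {j ∈ C | σ j = a}) (hab : a ≠ b) :
    load C (reassign σ Q b) a + #Q = load C σ a := by
  have : {j ∈ C | reassign σ Q b j = a} = {j ∈ C | σ j = a} \ Q := by
    ext j
    by_cases hj : j ∈ Q <;> simp [hj, reassign_of_mem, reassign_of_notMem, hab.symm]
  rw [load, this, card_sdiff_add_card_eq_card hQ, load]

theorem load_reassign_target (hQ : Q ⊆ {j ∈ C | σ j = a}) (hab : a ≠ b) :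
    load C (reassign σ Q b) b = load C σ b + #Q := by
  have hunion : {j ∈ C | reassign σ Q b j = b} = {j ∈ C | σ j = b} ∪ Q := by
    ext j
    by_cases hj : j ∈ Q
    · simp [hj, reassign_of_mem, (mem_filter.1 (hQ hj)).1]
    · simp [hj, reassign_of_notMem]
  have hdisj : Disjoint {j ∈ C | σ j = b} Q := disjoint_left.2 fun j hjb hjQ =>
    hab ((mem_filter.1 (hQ hjQ)).2.symm.trans (mem_filter.1 hjb).2)
  rw [load, hunion, card_union_of_disjoint hdisj, load]

theorem load_reassign_of_ne (hQ : Q ⊆ {j ∈ C | σ j = a}) (hia : i ≠ a) (hib : i ≠ b) :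
    load C (reassign σ Q b) i = load C σ i := by
  refine congrArg card (filter_congr fun j _ => ?_)
  by_cases hj : j ∈ Q
  · simp [reassign_of_mem hj, (mem_filter.1 (hQ hj)).2, hia.symm, hib.symm]
  · rw [reassign_of_notMem hj]

theorem sum_reassign_le (hQ : Q ⊆ {j ∈ C | σ j = a}) {c : α → β → ℝ} {δ : ℝ}
    (hc : ∀ j ∈ Q, c j b ≤ c j a + δ) :
    ∑ j ∈ C, c j (reassign σ Q b j) ≤ ∑ j ∈ C, c j (σ j) + #Q * δ := by
  have hQC : Q ⊆ C := hQ.trans (filter_subset ..)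
  have hcard : #Q * δ = ∑ j ∈ C, if j ∈ Q then δ else 0 := by
    rw [← sum_filter, filter_mem_eq_inter, inter_eq_right.2 hQC, sum_const, nsmul_eq_mul]
  rw [hcard, ← sum_add_distrib]
  refine sum_le_sum fun j _ => ?_
  by_cases hj : j ∈ Q
  · simpa [reassign_of_mem hj, hj, (mem_filter.1 (hQ hj)).2] using hc j hj
  · simp [reassign_of_notMem hj, hj]

end ReassignLoad

theorem IsAssignment.exists_move (hσ : IsAssignment F C U σ) {a b : β} (hab : a ≠ b)
    (hb : b ∈ F) {n : ℕ} (hn : n ≤ load C σ a) (hcap : load C σ b + n ≤ U) :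
    ∃ τ, IsAssignment F C U τ ∧ load C τ a + n = load C σ a ∧ load C τ b = load C σ b + n ∧
      (∀ i, i ≠ a → i ≠ b → load C τ i = load C σ i) ∧
      ∀ (c : α → β → ℝ) (δ : ℝ), (∀ j, c j b ≤ c j a + δ) →
        ∑ j ∈ C, c j (τ j) ≤ ∑ j ∈ C, c j (σ j) + n * δ := by
  classical
  obtain ⟨Q, hQ, rfl⟩ := exists_subset_card_eq hn
  have hsource := load_reassign_source_add_card hQ hab
  have htarget := load_reassign_target hQ hab
  have hother := fun i => load_reassign_of_ne (i := i) (b := b) hQ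
  refine ⟨reassign σ Q b, ⟨fun j hj => ?_, fun i hi => ?_⟩, hsource, htarget, hother,
    fun c δ hc => sum_reassign_le hQ fun j _ => hc j⟩
  · by_cases hjQ : j ∈ Q
    · rwa [reassign_of_mem hjQ]
    · rw [reassign_of_notMem hjQ]
      exact hσ.mem j hj
  · have hload := hσ.load_le i hi
    rcases eq_or_ne i a with rfl | hia
    · lia
    rcases eq_or_ne i b with rfl | hib
    · lia
    rwa [hother i hia hib]

section PartiallyFilled

/-- The facilities that `σ` uses below their capacity `U`. -/
def partiallyFilled (F : Finset β) (C : Finset α) (U : ℕ) (σ : α → β) : Finset β :=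
  {i ∈ F | 0 < load C σ i ∧ load C σ i < U}

theorem mem_partiallyFilled {i : β} :
    i ∈ partiallyFilled F C U σ ↔ i ∈ F ∧ 0 < load C σ i ∧ load C σ i < U :=
  mem_filter

-- Clients move from `i'` to `i` until `i'` is empty or `i` is full.
theorem IsAssignment.exists_partiallyFilled_ssubset (hσ : IsAssignment F C U σ) {i i' : β}
    (hi : i ∈ partiallyFilled F C U σ) (hi' : i' ∈ partiallyFilled F C U σ) (hne : i ≠ i')
    {c : α → β → ℝ} (hc : ∀ j, c j i ≤ c j i') :
    ∃ τ, IsAssignment F C U τ ∧ ∑ j ∈ C, c j (τ j) ≤ ∑ j ∈ C, c j (σ j) ∧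
      partiallyFilled F C U τ ⊂ partiallyFilled F C U σ := by
  obtain ⟨hiF, hpos, hlt⟩ := mem_partiallyFilled.1 hi
  obtain ⟨-, hpos', hlt'⟩ := mem_partiallyFilled.1 hi'
  obtain ⟨τ, hτ, hsource, htarget, hother, hcost⟩ := hσ.exists_move hne.symm hiF
    (n := min (U - load C σ i) (load C σ i')) (by lia) (by lia)
  refine ⟨τ, hτ, by simpa using hcost c 0 (by simpa using hc), ?_⟩
  rw [ssubset_iff_subset_ne]
  refine ⟨fun k hk => ?_, fun heq => ?_⟩
  · rcases eq_or_ne k i with rfl | hki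
    · exact hi
    rcases eq_or_ne k i' with rfl | hki'
    · exact hi'
    rw [mem_partiallyFilled] at hk ⊢
    rwa [hother k hki' hki] at hk
  · obtain ⟨-, -, hnot_full⟩ := mem_partiallyFilled.1 (heq ▸ hi)
    obtain ⟨-, hnot_empty, -⟩ := mem_partiallyFilled.1 (heq ▸ hi')
    lia

theorem IsAssignment.exists_injOn_partiallyFilled {κ : Type*} {c : α → β → ℝ} {ν : β → κ}
    (hc : ∀ i i', ν i = ν i' → (∀ j, c j i ≤ c j i') ∨ ∀ j, c j i' ≤ c j i)
    (hσ : IsAssignment F C U σ) :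
    ∃ τ, IsAssignment F C U τ ∧ ∑ j ∈ C, c j (τ j) ≤ ∑ j ∈ C, c j (σ j) ∧
      Set.InjOn ν (partiallyFilled F C U τ) := by
  obtain ⟨τ, ⟨hτ, hτσ⟩, hmin⟩ := exists_minimalFor_of_wellFoundedLT
    (fun τ => IsAssignment F C U τ ∧ ∑ j ∈ C, c j (τ j) ≤ ∑ j ∈ C, c j (σ j))
    (partiallyFilled F C U) ⟨σ, hσ, le_rfl⟩
  refine ⟨τ, hτ, hτσ, fun i hi i' hi' hν => ?_⟩
  by_contra hne
  obtain ⟨τ', hτ', hcost, hssub⟩ : ∃ τ', IsAssignment F C U τ' ∧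
      ∑ j ∈ C, c j (τ' j) ≤ ∑ j ∈ C, c j (τ j) ∧
      partiallyFilled F C U τ' ⊂ partiallyFilled F C U τ := by
    rcases hc i i' hν with h | h
    · exact hτ.exists_partiallyFilled_ssubset hi hi' hne h
    · exact hτ.exists_partiallyFilled_ssubset hi' hi (Ne.symm hne) h
  exact hssub.2 (hmin ⟨hτ', hcost.trans hτσ⟩ hssub.1)

end PartiallyFilled

section Consolidate

/-- The assignment that closes every facility with at most `w` clients under `σ` and reroutes
its clients to its hub. -/
def consolidate (C : Finset α) (σ : α → β) (hub : β → β) (w : ℕ) (j : α) : β :=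
  if load C σ (σ j) ≤ w then hub (σ j) else σ j

theorem IsAssignment.load_consolidate_le (hσ : IsAssignment F C U σ) {hub : β → β} {w : ℕ}
    (hw : w < U) (hinj : Set.InjOn hub (partiallyFilled F C U σ)) {q : β} (hq : q ∈ F) :
    load C (consolidate C σ hub w) q ≤ U + w := by
  classical
  let rerouted : Finset α := {j ∈ C | load C σ (σ j) ≤ w ∧ hub (σ j) = q}
  have hsub : {j ∈ C | consolidate C σ hub w j = q} ⊆ {j ∈ C | σ j = q} ∪ rerouted := by
    intro j hj
    obtain ⟨hjC, hjq⟩ := mem_filter.1 hj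
    unfold consolidate at hjq
    split_ifs at hjq with hsmall
    · exact mem_union_right _ (mem_filter.2 ⟨hjC, hsmall, hjq⟩)
    · exact mem_union_left _ (mem_filter.2 ⟨hjC, hjq⟩)
  have hpartial (j : α) (hj : j ∈ rerouted) : σ j ∈ partiallyFilled F C U σ := by
    obtain ⟨hjC, hsmall, -⟩ := mem_filter.1 hj
    exact mem_partiallyFilled.2 ⟨hσ.mem j hjC, load_pos hjC, hsmall.trans_lt hw⟩
  have hrerouted : #rerouted ≤ w := by
    rcases rerouted.eq_empty_or_nonempty with hempty | ⟨j₀, hj₀⟩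
    · simp [hempty]
    obtain ⟨-, hsmall, hhub₀⟩ := mem_filter.1 hj₀
    refine (card_le_card fun j hj => ?_).trans hsmall
    obtain ⟨hjC, -, hhub⟩ := mem_filter.1 hj
    exact mem_filter.2 ⟨hjC, hinj (hpartial j hj) (hpartial j₀ hj₀) (hhub.trans hhub₀.symm)⟩
  exact (card_le_card hsub).trans ((card_union_le ..).trans
    (add_le_add (hσ.load_le q hq) hrerouted))

theorem IsAssignment.consolidate (hσ : IsAssignment F C U σ) {hub : β → β} {w : ℕ}
    (hw : w < U) (hinj : Set.InjOn hub (partiallyFilled F C U σ)) {B : Finset β} (hB : B ⊆ F)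
    (hhub : ∀ i, hub i ∈ B) :
    IsAssignment (B ∪ {i ∈ F | w < load C σ i}) C (U + w) (consolidate C σ hub w) where
  mem j hj := by
    unfold LBUBFL.consolidate
    split_ifs with hsmall
    · exact mem_union_left _ (hhub _)
    · exact mem_union_right _ (mem_filter.2 ⟨hσ.mem j hj, not_le.1 hsmall⟩)
  load_le q hq :=
    hσ.load_consolidate_le hw hinj (union_subset hB (filter_subset ..) hq)

theorem IsAssignment.sum_filter_lt_load_le (hσ : IsAssignment F C U σ) {g : β → ℝ}
    (hg : ∀ i ∈ F, 0 ≤ g i) (w : ℕ) :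
    ∑ i ∈ F with w < load C σ i, g i ≤ ∑ j ∈ C, g (σ j) / (w + 1) := by
  rw [sum_comp_eq_sum_load_mul hσ.mem fun i => g i / (w + 1), sum_filter]
  refine sum_le_sum fun i hi => ?_
  have hgi := hg i hi
  split_ifs with hlarge
  · have hload : (w + 1 : ℝ) ≤ load C σ i := mod_cast hlarge
    rw [← mul_div_assoc, le_div_iff₀ (by positivity), mul_comm]
    exact mul_le_mul_of_nonneg_right hload hgi
  · positivity

end Consolidate

end Assignments

theorem exists_pairwiseDisjoint_forall_exists_le {ι α R : Type*} [PartialOrder α] [OrderBot α]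
    [LinearOrder R] (B : ι → α) (r : ι → R) (S : Finset ι) :
    ∃ T ⊆ S, (T : Set ι).PairwiseDisjoint B ∧
      ∀ s ∈ S, ∃ t ∈ T, r t ≤ r s ∧ (t = s ∨ ¬Disjoint (B s) (B t)) := by
  classical
  induction S using Finset.strongInduction with
  | H S ih =>
  rcases S.eq_empty_or_nonempty with rfl | hS
  · exact ⟨∅, by simp⟩
  obtain ⟨i, hi, hmin⟩ := exists_min_image S r hS
  let rest : Finset ι := {s ∈ S | i ≠ s ∧ Disjoint (B s) (B i)}
  have hrest : rest ⊂ S := filter_ssubset.2 ⟨i, hi, by simp⟩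
  obtain ⟨T, hT, hdisj, hcover⟩ := ih rest hrest
  refine ⟨insert i T, insert_subset hi (hT.trans hrest.1), ?_, fun s hs => ?_⟩
  · rw [coe_insert, Set.pairwiseDisjoint_insert]
    exact ⟨hdisj, fun t ht _ => (mem_filter.1 (hT ht)).2.2.symm⟩
  · by_cases hs' : s ∈ rest
    · obtain ⟨t, ht, hts⟩ := hcover s hs'
      exact ⟨t, mem_insert_of_mem ht, hts⟩
    · refine ⟨i, mem_insert_self i T, hmin s hs, ?_⟩
      by_contra! h
      exact hs' (mem_filter.2 ⟨hs, h⟩)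

section Saturation

variable {α β : Type*} [DecidableEq β] {C : Finset α} {O T : Finset β} {B : β → Finset α}
  {m V : ℕ} {σ τ : α → β}

/-- `τ` arises from `σ` by moving clients to facilities `i ∈ T`, each client coming from the
neighbourhood `B i`, so that all facilities in `T` end up with at least `m` clients. -/
structure IsSaturation (C : Finset α) (T : Finset β) (B : β → Finset α) (m : ℕ)
    (σ τ : α → β) : Prop where
  mem_of_ne : ∀ j ∈ C, τ j ≠ σ j → τ j ∈ T ∧ j ∈ B (τ j)
  le_load : ∀ i ∈ T, m ≤ load C τ i

theorem exists_isSaturation (hdisj : (T : Set β).PairwiseDisjoint B) (hBC : ∀ i ∈ T, B i ⊆ C)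
    (hm : ∀ i ∈ T, m ≤ #(B i)) (σ : α → β) : ∃ τ, IsSaturation C T B m σ τ := by
  classical
  let τ (j : α) : β := if h : ∃ i ∈ T, j ∈ B i then h.choose else σ j
  refine ⟨τ, fun j _ hne => ?_, fun i hi => ?_⟩
  · by_cases h : ∃ i ∈ T, j ∈ B i
    · simpa only [τ, dif_pos h] using h.choose_spec
    · exact absurd (dif_neg h) hne
  · refine (hm i hi).trans (card_le_card fun j hj => mem_filter.2 ⟨hBC i hi hj, ?_⟩)
    have h : ∃ i ∈ T, j ∈ B i := ⟨i, hi, hj⟩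
    obtain ⟨hτT, hτB⟩ := h.choose_spec
    simp only [τ, dif_pos h]
    exact hdisj.elim_finset hτT hi j hτB hj

theorem exists_isSaturation_load_le (hdisj : (T : Set β).PairwiseDisjoint B)
    (hBC : ∀ i ∈ T, B i ⊆ C) (hm : ∀ i ∈ T, m ≤ #(B i)) (σ : α → β) :
    ∃ τ, IsSaturation C T B m σ τ ∧ ∀ j ∈ C, τ j ≠ σ j → load C τ (τ j) ≤ m := by
  classical
  -- Move as few clients as possible: one sitting at an overfull facility could be sent back.
  obtain ⟨τ, hτ, hmin⟩ := exists_minimalFor_of_wellFoundedLT (IsSaturation C T B m σ)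
    (fun τ => {j ∈ C | τ j ≠ σ j}) (exists_isSaturation hdisj hBC hm σ)
  refine ⟨τ, hτ, fun j hj hne => ?_⟩
  by_contra! hover
  have hQ : {j} ⊆ {k ∈ C | τ k = τ j} := by simp [hj]
  have hback (k : α) (hk : reassign τ {j} (σ j) k ≠ σ k) :
      k ≠ j ∧ reassign τ {j} (σ j) k = τ k := by
    rcases eq_or_ne k j with rfl | hkj
    · exact absurd (reassign_of_mem (mem_singleton_self k)) hk
    · exact ⟨hkj, reassign_of_notMem (by simpa using hkj)⟩
  have hτ' : IsSaturation C T B m σ (reassign τ {j} (σ j)) := by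
    refine ⟨fun k hk hkne => ?_, fun i hi => ?_⟩
    · have hτk := (hback k hkne).2
      rw [hτk] at hkne ⊢
      exact hτ.mem_of_ne k hk hkne
    · have hsource := load_reassign_source_add_card hQ hne
      have htarget := load_reassign_target hQ hne
      rw [card_singleton] at hsource htarget
      have hload := hτ.le_load i hi
      rcases eq_or_ne i (τ j) with rfl | hia
      · lia
      rcases eq_or_ne i (σ j) with rfl | hib
      · lia
      rwa [load_reassign_of_ne hQ hia hib]
  have hfewer : ({k ∈ C | reassign τ {j} (σ j) k ≠ σ k} : Finset α) ⊆ {k ∈ C | τ k ≠ σ k} := by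
    refine monotone_filter_right C fun k _ hk => ?_
    rwa [(hback k hk).2] at hk
  have hj' := hmin hτ' hfewer (mem_filter.2 ⟨hj, hne⟩)
  exact (hback j (mem_filter.1 hj').2).1 rfl

theorem IsSaturation.isAssignment (hτ : IsSaturation C T B m σ τ)
    (hload : ∀ j ∈ C, τ j ≠ σ j → load C τ (τ j) ≤ m) (hσ : IsAssignment O C V σ)
    (hT : T ⊆ O) (hmV : m ≤ V) : IsAssignment O C V τ where
  mem j hj := by
    by_cases hne : τ j = σ j
    · exact hne ▸ hσ.mem j hj
    · exact hT (hτ.mem_of_ne j hj hne).1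
  load_le i hi := by
    by_cases h : ∃ j ∈ C, τ j = i ∧ τ j ≠ σ j
    · obtain ⟨j, hj, rfl, hne⟩ := h
      exact (hload j hj hne).trans hmV
    · push Not at h
      refine (card_le_card fun j hj => ?_).trans (hσ.load_le i hi)
      obtain ⟨hjC, hji⟩ := mem_filter.1 hj
      exact mem_filter.2 ⟨hjC, h j hjC hji ▸ hji⟩

theorem IsSaturation.sum_le (hτ : IsSaturation C T B m σ τ)
    (hload : ∀ j ∈ C, τ j ≠ σ j → load C τ (τ j) ≤ m) {c : α → β → ℝ} {ρ : β → ℝ}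
    (hc : ∀ j i, 0 ≤ c j i) (hcρ : ∀ i ∈ T, ∀ j ∈ B i, c j i ≤ ρ i) (hρ : ∀ i ∈ T, 0 ≤ ρ i) :
    ∑ j ∈ C, c j (τ j) ≤ ∑ j ∈ C, c j (σ j) + m * ∑ i ∈ T, ρ i := by
  let moved : Finset α := {j ∈ C | τ j ≠ σ j}
  have hmoved (i : β) : load moved τ i ≤ m := by
    rcases Nat.eq_zero_or_pos (load moved τ i) with h | h
    · exact h ▸ Nat.zero_le m
    obtain ⟨j, hj⟩ := card_pos.1 h
    obtain ⟨hj_moved, rfl⟩ := mem_filter.1 hj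
    obtain ⟨hjC, hne⟩ := mem_filter.1 hj_moved
    exact (card_le_card (filter_subset_filter _ (filter_subset ..))).trans (hload j hjC hne)
  have hmem (j : α) (hj : j ∈ moved) : τ j ∈ T ∧ j ∈ B (τ j) :=
    hτ.mem_of_ne j (mem_filter.1 hj).1 (mem_filter.1 hj).2
  calc ∑ j ∈ C, c j (τ j)
      ≤ ∑ j ∈ C, (c j (σ j) + if τ j ≠ σ j then ρ (τ j) else 0) := by
        refine sum_le_sum fun j hj => ?_
        split_ifs with hne
        · obtain ⟨hT, hB⟩ := hτ.mem_of_ne j hj hne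
          linarith [hcρ _ hT _ hB, hc j (σ j)]
        · rw [not_ne_iff.1 hne, add_zero]
    _ = ∑ j ∈ C, c j (σ j) + ∑ i ∈ T, load moved τ i * ρ i := by
        rw [sum_add_distrib, ← sum_filter,
          sum_comp_eq_sum_load_mul (fun j hj => (hmem j hj).1) ρ]
    _ ≤ ∑ j ∈ C, c j (σ j) + m * ∑ i ∈ T, ρ i := by
        rw [mul_sum]
        gcongr with i hi
        · exact hρ i hi
        · exact hmoved i

end Saturation

section Balancing

variable {X : Type*} [PseudoMetricSpace X] [DecidableEq X] {O C S T : Finset X} {m V : ℕ}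
  {σ τ : X → X} {ρ : X → ℝ}

-- Two facilities with at most `V` clients in total merge; otherwise they have at least `2 * m`.
theorem IsAssignment.exists_balanced_pair (hτ : IsAssignment O C V τ) (hm : 1 ≤ m)
    (hmV : 2 * m ≤ V + 1) {s t : X} (hs : s ∈ O) (ht : t ∈ O) (hst : s ≠ t)
    (hload : m ≤ load C τ t) :
    ∃ τ', IsAssignment O C V τ' ∧ (load C τ' s = 0 ∨ m ≤ load C τ' s) ∧ m ≤ load C τ' t ∧
      (∀ i, i ≠ s → i ≠ t → load C τ' i = load C τ i) ∧
      ∑ j ∈ C, dist j (τ' j) ≤ ∑ j ∈ C, dist j (τ j) + (m - 1) * dist s t := by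
  have hcost (n : ℕ) (hn : n < m) : (n : ℝ) * dist s t ≤ (m - 1) * dist s t := by
    have : (n : ℝ) + 1 ≤ m := mod_cast hn
    gcongr
    linarith
  rcases le_or_gt m (load C τ s) with hs_large | hs_small
  · refine ⟨τ, hτ, .inr hs_large, hload, fun _ _ _ => rfl, ?_⟩
    simpa using hcost 0 hm
  rcases le_or_gt (load C τ t + load C τ s) V with hmerge | hsplit
  · obtain ⟨τ', hτ', hsource, htarget, hother, hsum⟩ := hτ.exists_move hst ht le_rfl hmerge
    refine ⟨τ', hτ', .inl (by lia), by lia, hother, ?_⟩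
    linarith [hsum dist (dist s t) fun j => dist_triangle j s t, hcost _ hs_small]
  · obtain ⟨τ', hτ', hsource, htarget, hother, hsum⟩ := hτ.exists_move hst.symm hs
      (n := m - load C τ s) (by lia) (by lia)
    refine ⟨τ', hτ', .inr (by lia), by lia, fun i his hit => hother i hit his, ?_⟩
    have hpos : 0 < load C τ s := by have := hτ.load_le t ht; lia
    linarith [hsum dist (dist s t) fun j => dist_comm t s ▸ dist_triangle j t s,
      hcost (m - load C τ s) (by lia)]

theorem IsAssignment.exists_balanced_of_forall_exists_near (hτ : IsAssignment O C V τ)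
    (hm : 1 ≤ m) (hmV : 2 * m ≤ V + 1) (hT : T ⊆ O) (hload : ∀ t ∈ T, m ≤ load C τ t)
    (hS : S ⊆ O) (hST : Disjoint S T) {δ : X → ℝ} (hnear : ∀ s ∈ S, ∃ t ∈ T, dist s t ≤ δ s) :
    ∃ τ', IsAssignment O C V τ' ∧ (∀ t ∈ T, m ≤ load C τ' t) ∧
      (∀ s ∈ S, load C τ' s = 0 ∨ m ≤ load C τ' s) ∧
      ∑ j ∈ C, dist j (τ' j) ≤ ∑ j ∈ C, dist j (τ j) + (m - 1) * ∑ s ∈ S, δ s := by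
  induction S using Finset.induction_on with
  | empty => exact ⟨τ, hτ, hload, by simp⟩
  | insert s S hsS ih =>
  rw [insert_subset_iff] at hS
  rw [disjoint_insert_left] at hST
  rw [forall_mem_insert] at hnear
  obtain ⟨τ₁, hτ₁, hloadT, hloadS, hsum₁⟩ := ih hS.2 hST.2 hnear.2
  obtain ⟨t, ht, hst⟩ := hnear.1
  obtain ⟨τ₂, hτ₂, hs_load, ht_load, hother, hsum₂⟩ := hτ₁.exists_balanced_pair hm hmV hS.1
    (hT ht) (fun h => hST.1 (h ▸ ht)) (hloadT t ht)
  have hTnot (i : X) (hi : i ∈ T) : i ≠ s := fun h => hST.1 (h ▸ hi)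
  refine ⟨τ₂, hτ₂, fun i hi => ?_, ?_, ?_⟩
  · rcases eq_or_ne i t with rfl | hit
    · exact ht_load
    · exact hother i (hTnot i hi) hit ▸ hloadT i hi
  · refine forall_mem_insert _ _ _ |>.2 ⟨hs_load, fun i hi => ?_⟩
    rw [hother i (fun h => hsS (h ▸ hi)) fun h => disjoint_left.1 hST.2 hi (h ▸ ht)]
    exact hloadS i hi
  · have hm' : (0 : ℝ) ≤ m - 1 := sub_nonneg.2 (mod_cast hm)
    rw [sum_insert hsS, mul_add]
    linarith [mul_le_mul_of_nonneg_left hst hm']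

theorem IsAssignment.exists_balanced (hσ : IsAssignment O C V σ) (hm : 1 ≤ m)
    (hmV : 2 * m ≤ V + 1) (hρ : ∀ i ∈ O, 0 ≤ ρ i)
    (hball : ∀ i ∈ O, m ≤ #{j ∈ C | dist i j ≤ ρ i}) :
    ∃ τ, IsAssignment O C V τ ∧ (∀ i ∈ O, load C τ i = 0 ∨ m ≤ load C τ i) ∧
      ∑ j ∈ C, dist j (τ j) ≤ ∑ j ∈ C, dist j (σ j) + 2 * (m - 1) * ∑ i ∈ O, ρ i := by
  obtain rfl | hm2 : m = 1 ∨ 2 ≤ m := by lia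
  · exact ⟨σ, hσ, fun i _ => Nat.eq_zero_or_pos _, by simp⟩
  let ball (i : X) : Finset X := {j ∈ C | dist i j ≤ ρ i}
  obtain ⟨T, hT, hdisj, hcover⟩ := exists_pairwiseDisjoint_forall_exists_le ball ρ O
  obtain ⟨τ₁, hsat, hsat_load⟩ := exists_isSaturation_load_le hdisj
    (fun _ _ => filter_subset ..) (fun i hi => hball i (hT hi)) σ
  have hsum₁ := hsat.sum_le hsat_load (c := dist) (fun _ _ => dist_nonneg)
    (fun i _ j hj => dist_comm i j ▸ (mem_filter.1 hj).2) fun i hi => hρ i (hT hi)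
  have hnear (s : X) (hs : s ∈ O \ T) : ∃ t ∈ T, dist s t ≤ 2 * ρ s := by
    obtain ⟨hsO, hsT⟩ := mem_sdiff.1 hs
    obtain ⟨t, ht, hle, rfl | hmeet⟩ := hcover s hsO
    · exact absurd ht hsT
    obtain ⟨j, hjs, hjt⟩ := not_disjoint_iff.1 hmeet
    refine ⟨t, ht, ?_⟩
    linarith [dist_triangle_right s t j, (mem_filter.1 hjs).2, (mem_filter.1 hjt).2]
  obtain ⟨τ₂, hτ₂, hloadT, hloadS, hsum₂⟩ :=
    (hsat.isAssignment hsat_load hσ hT (by lia)).exists_balanced_of_forall_exists_near hm hmV hT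
      hsat.le_load sdiff_subset sdiff_disjoint hnear
  refine ⟨τ₂, hτ₂, fun i hi => ?_, ?_⟩
  · by_cases hiT : i ∈ T
    · exact .inr (hloadT i hiT)
    · exact hloadS i (mem_sdiff.2 ⟨hi, hiT⟩)
  · have hm2' : (2 : ℝ) ≤ m := mod_cast hm2
    have hρT : 0 ≤ ∑ i ∈ T, ρ i := sum_nonneg fun i hi => hρ i (hT hi)
    rw [← mul_sum] at hsum₂
    rw [← sum_sdiff hT]
    nlinarith

end Balancing

section FractionalCapacitated

variable {X : Type*} [PseudoMetricSpace X] {F C : Finset X} {U w : ℕ} {x : X → X → ℝ}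
  {y g : X → ℝ}

/-- `(x, y)` is a fractional solution of the capacitated facility location problem in which
every client is served exactly once. -/
structure IsCFLSolution (F C : Finset X) (U : ℕ) (x : X → X → ℝ) (y : X → ℝ) : Prop where
  sum_eq_one : ∀ j ∈ C, ∑ i ∈ F, x i j = 1
  sum_le : ∀ i ∈ F, ∑ j ∈ C, x i j ≤ U * y i
  nonneg : ∀ i ∈ F, ∀ j ∈ C, 0 ≤ x i j
  le_opening : ∀ i ∈ F, ∀ j ∈ C, x i j ≤ y i
  opening_nonneg : ∀ i ∈ F, 0 ≤ y i
  opening_le_one : ∀ i ∈ F, y i ≤ 1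

/-- The connection cost of the client `j` in `x`, which is its average distance to the
facilities if `x` serves it exactly once. -/
def avgDist (F : Finset X) (x : X → X → ℝ) (j : X) : ℝ := ∑ i ∈ F, dist i j * x i j

/-- The facilities within twice the average distance of the client `j`. -/
noncomputable def nearFacilities (F : Finset X) (x : X → X → ℝ) (j : X) : Finset X :=
  {i ∈ F | dist i j ≤ 2 * avgDist F x j}

namespace IsCFLSolution

theorem half_le_sum_nearFacilities (h : IsCFLSolution F C U x y) {j : X} (hj : j ∈ C) :
    1 / 2 ≤ ∑ i ∈ nearFacilities F x j, y i :=
  (half_le_sum_filter_le_two_mul (fun _ _ => dist_nonneg) (fun i hi => h.nonneg i hi j hj)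
    (h.sum_eq_one j hj)).trans
    (sum_le_sum fun i hi => h.le_opening i (mem_of_mem_filter i hi) j hj)

theorem nearFacilities_nonempty (h : IsCFLSolution F C U x y) {j : X} (hj : j ∈ C) :
    (nearFacilities F x j).Nonempty :=
  nonempty_of_sum_ne_zero (f := y) (by linarith [h.half_le_sum_nearFacilities hj])

theorem exists_mem_nearFacilities_le (h : IsCFLSolution F C U x y) (hg : ∀ i ∈ F, 0 ≤ g i)
    {j : X} (hj : j ∈ C) :
    ∃ b ∈ nearFacilities F x j, g b ≤ 2 * ∑ i ∈ nearFacilities F x j, g i * y i := by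
  obtain ⟨b, hb, hle⟩ := exists_mul_sum_le_sum_mul (d := g) (h.nearFacilities_nonempty hj)
    fun i hi => h.opening_nonneg i (mem_of_mem_filter i hi)
  refine ⟨b, hb, ?_⟩
  nlinarith [h.half_le_sum_nearFacilities hj, hg b (mem_of_mem_filter b hb)]

theorem exists_hubs (h : IsCFLSolution F C U x y) (hg : ∀ i ∈ F, 0 ≤ g i) :
    ∃ B ⊆ F, ∑ i ∈ B, g i ≤ 2 * ∑ i ∈ F, g i * y i ∧
      ∀ j ∈ C, ∃ b ∈ B, dist j b ≤ 6 * avgDist F x j := by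
  classical
  obtain ⟨T, hTC, hdisj, hcover⟩ :=
    exists_pairwiseDisjoint_forall_exists_le (nearFacilities F x) (avgDist F x) C
  choose! b hb_mem hb_cost using fun j hj => h.exists_mem_nearFacilities_le hg (j := j) hj
  have hb (t : X) (ht : t ∈ T) : b t ∈ F ∧ dist (b t) t ≤ 2 * avgDist F x t :=
    mem_filter.1 (hb_mem t (hTC ht))
  refine ⟨T.image b, image_subset_iff.2 fun t ht => (hb t ht).1, ?_, fun j hj => ?_⟩
  · calc ∑ i ∈ T.image b, g i
        ≤ ∑ t ∈ T, g (b t) :=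
          sum_image_le_of_nonneg fun i hi => by
            obtain ⟨t, ht, rfl⟩ := mem_image.1 hi
            exact hg _ (hb t ht).1
      _ ≤ ∑ t ∈ T, 2 * ∑ i ∈ nearFacilities F x t, g i * y i :=
          sum_le_sum fun t ht => hb_cost t (hTC ht)
      _ = 2 * ∑ i ∈ T.biUnion (nearFacilities F x), g i * y i := by
          rw [← mul_sum, sum_biUnion hdisj]
      _ ≤ 2 * ∑ i ∈ F, g i * y i :=
          mul_le_mul_of_nonneg_left (sum_le_sum_of_subset_of_nonneg
            (biUnion_subset.2 fun _ _ => filter_subset ..)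
            fun i hi _ => mul_nonneg (hg i hi) (h.opening_nonneg i hi)) zero_le_two
  · obtain ⟨t, ht, hle, hmeet⟩ := hcover j hj
    obtain ⟨i, hij, hit⟩ : ∃ i ∈ nearFacilities F x j, i ∈ nearFacilities F x t := by
      rcases hmeet with rfl | hmeet
      · exact (h.nearFacilities_nonempty hj).imp fun i hi => ⟨hi, hi⟩
      · exact not_disjoint_iff.1 hmeet
    refine ⟨b t, mem_image_of_mem b ht, ?_⟩
    linarith [dist_triangle4 j i t (b t), dist_comm j i, dist_comm t (b t), (hb t ht).2,
      (mem_filter.1 hij).2, (mem_filter.1 hit).2]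

theorem exists_nearest_hub (h : IsCFLSolution F C U x y) (hg : ∀ i ∈ F, 0 ≤ g i)
    (hC : C.Nonempty) :
    ∃ B ⊆ F, ∃ hub : X → X, ∑ i ∈ B, g i ≤ 2 * ∑ i ∈ F, g i * y i ∧ (∀ i, hub i ∈ B) ∧
      ∀ i, ∀ j ∈ C, dist i (hub i) ≤ dist i j + 6 * avgDist F x j := by
  obtain ⟨B, hBF, hB_cost, hnear⟩ := h.exists_hubs hg
  have hB : B.Nonempty := by
    obtain ⟨j, hj⟩ := hC
    exact (hnear j hj).imp fun _ hb => hb.1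
  choose hub hhub hmin using fun i => exists_min_image B (dist i) hB
  refine ⟨B, hBF, hub, hB_cost, hhub, fun i j hj => ?_⟩
  obtain ⟨b, hb, hjb⟩ := hnear j hj
  linarith [hmin i b hb, dist_triangle i j b]

theorem sum_mul_rerouteCost_le (h : IsCFLSolution F C U x y) (hg : ∀ i ∈ F, 0 ≤ g i)
    {hub : X → X}
    (hhub : ∀ i, ∀ j ∈ C, dist i (hub i) ≤ dist i j + 6 * avgDist F x j) (w : ℕ) :
    ∑ j ∈ C, ∑ i ∈ F, x i j * (dist j (hub i) + (dist i (hub i) + g i / (w + 1))) ≤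
      U / (w + 1) * ∑ i ∈ F, g i * y i + 15 * ∑ j ∈ C, avgDist F x j := by
  have hopen : ∑ j ∈ C, ∑ i ∈ F, g i / (w + 1) * x i j ≤ U / (w + 1) * ∑ i ∈ F, g i * y i := by
    rw [sum_comm, mul_sum]
    refine sum_le_sum fun i hi => ?_
    have hgi := hg i hi
    calc ∑ j ∈ C, g i / (w + 1) * x i j
        = g i / (w + 1) * ∑ j ∈ C, x i j := (mul_sum ..).symm
      _ ≤ g i / (w + 1) * (U * y i) := by gcongr; exact h.sum_le i hi
      _ = U / (w + 1) * (g i * y i) := by ring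
  have hclient (j : X) (hj : j ∈ C) :
      ∑ i ∈ F, x i j * (dist j (hub i) + (dist i (hub i) + g i / (w + 1))) ≤
        15 * avgDist F x j + ∑ i ∈ F, g i / (w + 1) * x i j := by
    calc ∑ i ∈ F, x i j * (dist j (hub i) + (dist i (hub i) + g i / (w + 1)))
        ≤ ∑ i ∈ F, x i j * (3 * dist i j + 12 * avgDist F x j + g i / (w + 1)) := by
          refine sum_le_sum fun i hi => mul_le_mul_of_nonneg_left ?_ (h.nonneg i hi j hj)
          linarith [hhub i j hj, dist_triangle_left j (hub i) i]
      _ = 3 * avgDist F x j + 12 * avgDist F x j * ∑ i ∈ F, x i j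
            + ∑ i ∈ F, g i / (w + 1) * x i j := by
          simp only [avgDist, mul_sum, ← sum_add_distrib]
          exact sum_congr rfl fun i _ => by ring
      _ = 15 * avgDist F x j + ∑ i ∈ F, g i / (w + 1) * x i j := by
          rw [h.sum_eq_one j hj]
          ring
  calc _ ≤ ∑ j ∈ C, (15 * avgDist F x j + ∑ i ∈ F, g i / (w + 1) * x i j) := sum_le_sum hclient
    _ ≤ _ := by
      rw [sum_add_distrib, ← mul_sum]
      linarith

theorem exists_isAssignment [DecidableEq X] (h : IsCFLSolution F C U x y)
    (hg : ∀ i ∈ F, 0 ≤ g i) (hC : C.Nonempty) (hw : w < U) :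
    ∃ O ⊆ F, ∃ σ, IsAssignment O C (U + w) σ ∧
      ∑ i ∈ O, g i + ∑ j ∈ C, dist j (σ j) ≤
        (2 + U / (w + 1)) * ∑ i ∈ F, g i * y i + 15 * ∑ j ∈ C, avgDist F x j := by
  obtain ⟨B, hBF, hub, hB_cost, hhub, hhub_dist⟩ := h.exists_nearest_hub hg hC
  -- Among facilities with a common hub, `rerouteCost` gives all clients the same preferences.
  let rerouteCost (j i : X) : ℝ := dist j (hub i) + (dist i (hub i) + g i / (w + 1))
  have hcap (i : X) (hi : i ∈ F) : ∑ j ∈ C, x i j ≤ U :=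
    (h.sum_le i hi).trans (mul_le_of_le_one_right U.cast_nonneg (h.opening_le_one i hi))
  have := hC.to_type
  obtain ⟨σ₀, hσ₀_mem, hσ₀_load, hσ₀_cost⟩ := exists_integral_transportation (u := fun _ => U)
    h.nonneg h.sum_eq_one hcap rerouteCost
  obtain ⟨σ, hσ, hσ_cost, hinj⟩ :=
    IsAssignment.exists_injOn_partiallyFilled (c := rerouteCost) (ν := hub)
      (fun i i' hν => by simpa [rerouteCost, hν] using le_total _ _)
      ⟨hσ₀_mem, fun i _ => hσ₀_load i⟩
  refine ⟨_, union_subset hBF (filter_subset ..), _, hσ.consolidate hw hinj hBF hhub, ?_⟩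
  have hconnect (j : X) :
      dist j (consolidate C σ hub w j) ≤ dist j (hub (σ j)) + dist (σ j) (hub (σ j)) := by
    unfold consolidate
    split_ifs
    · exact le_add_of_nonneg_right dist_nonneg
    · exact dist_triangle_right _ _ _
  have hopen : ∑ i ∈ B ∪ {i ∈ F | w < load C σ i}, g i ≤
      ∑ i ∈ B, g i + ∑ i ∈ F with w < load C σ i, g i := by
    rw [← sum_union_inter]
    exact le_add_of_nonneg_right (sum_nonneg fun i hi => hg i (hBF (mem_inter.1 hi).1))
  have hsplit : ∑ j ∈ C, rerouteCost j (σ j) = ∑ j ∈ C, (dist j (hub (σ j)) +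
      dist (σ j) (hub (σ j))) + ∑ j ∈ C, g (σ j) / (w + 1) := by
    simp only [rerouteCost, ← add_assoc, sum_add_distrib]
  linarith [hσ.sum_filter_lt_load_le hg w, h.sum_mul_rerouteCost_le hg hhub_dist w,
    sum_le_sum fun j (_ : j ∈ C) => hconnect j]

end IsCFLSolution

end FractionalCapacitated

theorem exists_radius {α : Type*} {C : Finset α} {d z : α → ℝ} {v : ℝ} {L m : ℕ}
    (hd : ∀ j ∈ C, 0 ≤ d j) (hz : ∀ j ∈ C, 0 ≤ z j) (hv : 0 ≤ v) (hzv : ∀ j ∈ C, z j ≤ v)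
    (hL : L * v ≤ ∑ j ∈ C, z j) (hmL : m ≤ L) (hmC : m ≤ #C) :
    ∃ ρ, 0 ≤ ρ ∧ m ≤ #{j ∈ C | d j ≤ ρ} ∧ (L - m + 1) * (ρ * v) ≤ ∑ j ∈ C, d j * z j := by
  have hcost : 0 ≤ ∑ j ∈ C, d j * z j := sum_nonneg fun j hj => mul_nonneg (hd j hj) (hz j hj)
  rcases hv.eq_or_lt with rfl | hv
  · refine ⟨∑ j ∈ C, d j, sum_nonneg hd, ?_, by simpa using hcost⟩
    rwa [filter_true_of_mem fun j hj => single_le_sum hd hj]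
  have hmL' : (m : ℝ) ≤ L := mod_cast hmL
  have hscale : 0 < (L - m + 1) * v := mul_pos (by linarith) hv
  set ρ := (∑ j ∈ C, d j * z j) / ((L - m + 1) * v)
  have hρ : ρ * ((L - m + 1) * v) = ∑ j ∈ C, d j * z j := div_mul_cancel₀ _ hscale.ne'
  have hρ0 : 0 ≤ ρ := div_nonneg hcost hscale.le
  refine ⟨ρ, hρ0, ?_, by linarith⟩
  by_contra! hfew
  have hfew' : (#{j ∈ C | d j ≤ ρ} : ℝ) + 1 ≤ m := mod_cast hfew
  have hnear : ∑ j ∈ C with d j ≤ ρ, z j ≤ (m - 1) * v := by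
    refine (sum_le_card_nsmul _ _ v fun j hj => hzv j (mem_of_mem_filter j hj)).trans ?_
    rw [nsmul_eq_mul]
    gcongr
    linarith
  have hfar : (L - m + 1) * v ≤ ∑ j ∈ C with ρ < d j, z j := by
    have hsplit := sum_filter_add_sum_filter_not C (d · ≤ ρ) z
    simp only [not_le] at hsplit
    linarith
  have hmarkov := mul_sum_filter_lt_lt_sum_mul hd hz (hscale.trans_le hfar)
  exact hmarkov.not_ge (hρ ▸ mul_le_mul_of_nonneg_left hfar hρ0)

section LinearProgram

variable {X : Type*} {F C : Finset X} {L U m w : ℕ} {x : X → X → ℝ} {y f : X → ℝ} {κ : ℝ}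

/-- `(x, y)` is a feasible fractional solution of the linear program for facility location
with uniform lower bound `L` and upper bound `U`. -/
structure IsLPSolution (F C : Finset X) (L U : ℕ) (x : X → X → ℝ) (y : X → ℝ) : Prop where
  one_le_sum : ∀ j ∈ C, 1 ≤ ∑ i ∈ F, x i j
  le_sum : ∀ i ∈ F, L * y i ≤ ∑ j ∈ C, x i j
  sum_le : ∀ i ∈ F, ∑ j ∈ C, x i j ≤ U * y i
  nonneg : ∀ i ∈ F, ∀ j ∈ C, 0 ≤ x i j
  le_opening : ∀ i ∈ F, ∀ j ∈ C, x i j ≤ y i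
  opening_le_one : ∀ i ∈ F, y i ≤ 1

namespace IsLPSolution

theorem opening_nonneg (h : IsLPSolution F C L U x y) (hU : 0 < U) {i : X} (hi : i ∈ F) :
    0 ≤ y i :=
  nonneg_of_mul_nonneg_right ((sum_nonneg (h.nonneg i hi)).trans (h.sum_le i hi))
    (Nat.cast_pos.2 hU)

theorem sum_mul_opening_nonneg (h : IsLPSolution F C L U x y) (hU : 0 < U)
    (hf : ∀ i ∈ F, 0 ≤ f i) : 0 ≤ ∑ i ∈ F, f i * y i :=
  sum_nonneg fun i hi => mul_nonneg (hf i hi) (h.opening_nonneg hU hi)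

theorem sum_dist_mul_nonneg [PseudoMetricSpace X] (h : IsLPSolution F C L U x y) :
    0 ≤ ∑ i ∈ F, ∑ j ∈ C, dist i j * x i j :=
  sum_nonneg fun i hi => sum_nonneg fun j hj => mul_nonneg dist_nonneg (h.nonneg i hi j hj)

theorem lowerBound_le_card (h : IsLPSolution F C L U x y) (hC : C.Nonempty) : L ≤ #C := by
  obtain ⟨j, hj⟩ := hC
  obtain ⟨i, hi, hxij⟩ : ∃ i ∈ F, 0 < x i j :=
    (sum_pos_iff_of_nonneg fun i hi => h.nonneg i hi j hj).1
      (by linarith [h.one_le_sum j hj])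
  have hy : 0 < y i := hxij.trans_le (h.le_opening i hi j hj)
  have hle : L * y i ≤ #C * y i := by
    simpa using (h.le_sum i hi).trans (sum_le_card_nsmul C _ _ (h.le_opening i hi))
  exact_mod_cast le_of_mul_le_mul_right hle hy

theorem exists_isCFLSolution (h : IsLPSolution F C L U x y) (hU : 0 < U) :
    ∃ x', IsCFLSolution F C U x' y ∧ ∀ i ∈ F, ∀ j ∈ C, x' i j ≤ x i j := by
  let x' (i j : X) : ℝ := x i j / ∑ k ∈ F, x k j
  have hle : ∀ i ∈ F, ∀ j ∈ C, x' i j ≤ x i j := fun i hi j hj =>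
    div_le_self (h.nonneg i hi j hj) (h.one_le_sum j hj)
  refine ⟨x', ?_, hle⟩
  exact
    { sum_eq_one := fun j hj => by
        rw [← sum_div, div_self (by linarith [h.one_le_sum j hj])]
      sum_le := fun i hi => (sum_le_sum (hle i hi)).trans (h.sum_le i hi)
      nonneg := fun i hi j hj =>
        div_nonneg (h.nonneg i hi j hj) (sum_nonneg fun k hk => h.nonneg k hk j hj)
      le_opening := fun i hi j hj => (hle i hi j hj).trans (h.le_opening i hi j hj)
      opening_nonneg := fun i hi => h.opening_nonneg hU hi
      opening_le_one := h.opening_le_one }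

theorem exists_radii [PseudoMetricSpace X] (h : IsLPSolution F C L U x y) (hU : 0 < U)
    (hC : C.Nonempty) (hm : 1 ≤ m) (hmL : m ≤ L) (hκ : m - 1 ≤ κ * (L - m + 1)) :
    ∃ ρ : X → ℝ, ∀ i ∈ F, 0 ≤ ρ i ∧ m ≤ #{j ∈ C | dist i j ≤ ρ i} ∧
      (m - 1) * (ρ i * y i) ≤ κ * ∑ j ∈ C, dist i j * x i j := by
  have hm' : (1 : ℝ) ≤ m := mod_cast hm
  have hmL' : (m : ℝ) ≤ L := mod_cast hmL
  have hκ0 : 0 ≤ κ := nonneg_of_mul_nonneg_left ((sub_nonneg.2 hm').trans hκ) (by linarith)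
  choose! ρ hρ0 hball hcost using fun i (hi : i ∈ F) =>
    exists_radius (d := dist i) (fun _ _ => dist_nonneg) (h.nonneg i hi)
      (h.opening_nonneg hU hi) (h.le_opening i hi) (h.le_sum i hi) hmL
      (hmL.trans (h.lowerBound_le_card hC))
  refine ⟨ρ, fun i hi => ⟨hρ0 i hi, hball i hi, ?_⟩⟩
  calc (m - 1) * (ρ i * y i)
      ≤ κ * (L - m + 1) * (ρ i * y i) :=
        mul_le_mul_of_nonneg_right hκ (mul_nonneg (hρ0 i hi) (h.opening_nonneg hU hi))
    _ = κ * ((L - m + 1) * (ρ i * y i)) := mul_assoc ..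
    _ ≤ κ * ∑ j ∈ C, dist i j * x i j := mul_le_mul_of_nonneg_left (hcost i hi) hκ0

-- A facility's opening cost is raised by the cost `2 * (m - 1) * ρ i` of balancing it later.
theorem exists_balanced_isAssignment [PseudoMetricSpace X] [DecidableEq X]
    (h : IsLPSolution F C L U x y) (hC : C.Nonempty) (hf : ∀ i ∈ F, 0 ≤ f i) (hm : 1 ≤ m)
    (hmL : m ≤ L) (hmw : m ≤ w + 1) (hwU : w < U) (hκ : m - 1 ≤ κ * (L - m + 1)) :
    ∃ O ⊆ F, ∃ τ, IsAssignment O C (U + w) τ ∧ (∀ i ∈ O, load C τ i = 0 ∨ m ≤ load C τ i) ∧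
      ∑ i ∈ O, f i + ∑ j ∈ C, dist j (τ j) ≤ (2 + U / (w + 1)) * (∑ i ∈ F, f i * y i +
        2 * κ * ∑ i ∈ F, ∑ j ∈ C, dist i j * x i j) +
        15 * ∑ i ∈ F, ∑ j ∈ C, dist i j * x i j := by
  obtain ⟨ρ, hρ⟩ := h.exists_radii hwU.pos hC hm hmL hκ
  have hm' : (0 : ℝ) ≤ m - 1 := sub_nonneg.2 (mod_cast hm)
  let g (i : X) : ℝ := f i + 2 * (m - 1) * ρ i
  have hg (i : X) (hi : i ∈ F) : 0 ≤ g i :=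
    add_nonneg (hf i hi) (mul_nonneg (by linarith) (hρ i hi).1)
  have hgy : ∑ i ∈ F, g i * y i ≤
      ∑ i ∈ F, f i * y i + 2 * κ * ∑ i ∈ F, ∑ j ∈ C, dist i j * x i j := by
    rw [mul_sum, ← sum_add_distrib]
    refine sum_le_sum fun i hi => ?_
    simp only [g]
    linarith [(hρ i hi).2.2]
  obtain ⟨x', hx', hx'x⟩ := h.exists_isCFLSolution hwU.pos
  have havg : ∑ j ∈ C, avgDist F x' j ≤ ∑ i ∈ F, ∑ j ∈ C, dist i j * x i j := by
    rw [sum_comm]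
    exact sum_le_sum fun j hj => sum_le_sum fun i hi =>
      mul_le_mul_of_nonneg_left (hx'x i hi j hj) dist_nonneg
  obtain ⟨O, hOF, σ, hσ, hσ_cost⟩ := hx'.exists_isAssignment hg hC hwU
  obtain ⟨τ, hτ, hτ_load, hτ_cost⟩ := hσ.exists_balanced hm (by lia)
    (fun i hi => (hρ i (hOF hi)).1) fun i hi => (hρ i (hOF hi)).2.1
  refine ⟨O, hOF, τ, hτ, hτ_load, ?_⟩
  have hgO : ∑ i ∈ O, g i = ∑ i ∈ O, f i + 2 * (m - 1) * ∑ i ∈ O, ρ i := by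
    rw [mul_sum, ← sum_add_distrib]
  have hfactor : (0 : ℝ) ≤ 2 + U / (w + 1) := by positivity
  linarith [mul_le_mul_of_nonneg_left hgy hfactor]

end IsLPSolution

end LinearProgram

section Parameters

variable {ℓ : ℝ}

theorem one_sub_one_div_mem_Ioo (hℓ : 1 < ℓ) : 1 - 1 / ℓ ∈ Set.Ioo (0 : ℝ) 1 := by
  have hinv : 1 / ℓ < 1 := (div_lt_one (by linarith)).2 hℓ
  have hpos : 0 < 1 / ℓ := one_div_pos.2 (by linarith)
  constructor <;> linarith

theorem ceil_mul_le_floor_mul_add_one {θ : ℝ} (hθ : 0 ≤ θ) {L U : ℕ} (hLU : L ≤ U) :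
    ⌈θ * L⌉₊ ≤ ⌊θ * U⌋₊ + 1 :=
  (Nat.ceil_mono (by gcongr)).trans (Nat.ceil_le_floor_add_one _)

theorem ceil_sub_one_le_sub_one_mul (hℓ : 1 < ℓ) (L : ℕ) :
    (⌈(1 - 1 / ℓ) * L⌉₊ - 1 : ℝ) ≤ (ℓ - 1) * (L - ⌈(1 - 1 / ℓ) * L⌉₊ + 1) := by
  have hθ := (one_sub_one_div_mem_Ioo hℓ).1
  have hceil : (⌈(1 - 1 / ℓ) * L⌉₊ : ℝ) < (1 - 1 / ℓ) * L + 1 := Nat.ceil_lt_add_one (by positivity)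
  have hscaled : ℓ * ((1 - 1 / ℓ) * L) = (ℓ - 1) * L := by field_simp
  linarith [mul_le_mul_of_nonneg_left hceil.le (by linarith : 0 ≤ ℓ)]

theorem div_floor_add_one_le (hℓ : 1 < ℓ) (U : ℕ) :
    U / (⌊(1 - 1 / ℓ) * U⌋₊ + 1 : ℝ) ≤ ℓ / (ℓ - 1) := by
  have hfloor := (Nat.lt_floor_add_one ((1 - 1 / ℓ) * U)).le
  rw [div_le_div_iff₀ (by positivity) (by linarith)]
  have hscaled : ℓ * ((1 - 1 / ℓ) * U) = U * (ℓ - 1) := by field_simp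
  exact hscaled ▸ mul_le_mul_of_nonneg_left hfloor (by linarith)

theorem roundingFactor_le (hℓ : 1 < ℓ) {r G W : ℝ} (hr : r ≤ ℓ / (ℓ - 1)) (hG : 0 ≤ G)
    (hW : 0 ≤ W) :
    (2 + r) * (G + 2 * (ℓ - 1) * W) + 15 * W ≤ (2 + ℓ / (ℓ - 1)) * G + (6 * ℓ + 11) * W := by
  have hsub : 0 < ℓ - 1 := sub_pos.2 hℓ
  calc (2 + r) * (G + 2 * (ℓ - 1) * W) + 15 * W
      ≤ (2 + ℓ / (ℓ - 1)) * (G + 2 * (ℓ - 1) * W) + 15 * W := by gcongr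
    _ = (2 + ℓ / (ℓ - 1)) * G + (6 * ℓ + 11) * W := by
        field_simp
        ring

theorem tricriteriaFactor_le (hℓ : 2 ≤ ℓ) {G W : ℝ} (hG : 0 ≤ G) (hW : 0 ≤ W) :
    (2 + ℓ / (ℓ - 1)) * G + (6 * ℓ + 11) * W ≤ (10 * ℓ + 4) * (G + W) := by
  have hratio : ℓ / (ℓ - 1) ≤ 2 := (div_le_iff₀ (by linarith)).2 (by linarith)
  rw [mul_add]
  exact add_le_add (mul_le_mul_of_nonneg_right (by linarith) hG)
    (mul_le_mul_of_nonneg_right (by linarith) hW)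

end Parameters

end LBUBFL

open LBUBFL

theorem lbubfl_tricriteria_general {X : Type*} [PseudoMetricSpace X] [DecidableEq X]
    {F C : Finset X} {f : X → ℝ} {L U : ℕ} (hf : ∀ i ∈ F, 0 ≤ f i) (hL : 0 < L) (hLU : L ≤ U)
    {ℓ : ℝ} (hℓ : 1 < ℓ) {x : X → X → ℝ} {y : X → ℝ} (h : IsLPSolution F C L U x y) :
    ∃ (F' : Finset X) (σ : X → X), F' ⊆ F ∧ (∀ j ∈ C, σ j ∈ F') ∧
      (∀ i ∈ F', (1 - 1 / ℓ) * L ≤ load C σ i ∧ load C σ i ≤ (2 - 1 / ℓ) * U) ∧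
      ∑ i ∈ F', f i + ∑ j ∈ C, dist j (σ j) ≤
        (2 + ℓ / (ℓ - 1)) * ∑ i ∈ F, f i * y i +
          (6 * ℓ + 11) * ∑ i ∈ F, ∑ j ∈ C, dist i j * x i j := by
  have hU : 0 < U := hL.trans_le hLU
  have hG := h.sum_mul_opening_nonneg hU hf
  have hW := h.sum_dist_mul_nonneg
  rcases C.eq_empty_or_nonempty with rfl | hC
  · refine ⟨∅, id, by simp, by simp, by simp, ?_⟩
    have hfactor : 0 ≤ 2 + ℓ / (ℓ - 1) :=
      add_nonneg zero_le_two (div_nonneg (by linarith) (by linarith))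
    simpa only [sum_empty, sum_const_zero, mul_zero, add_zero] using mul_nonneg hfactor hG
  obtain ⟨hθ0, hθ1⟩ := one_sub_one_div_mem_Ioo hℓ
  have hL' : (0 : ℝ) < L := mod_cast hL
  have hU' : (0 : ℝ) < U := mod_cast hU
  obtain ⟨O, hOF, τ, hτ, hload, hcost⟩ := h.exists_balanced_isAssignment hC hf
    (Nat.one_le_ceil_iff.2 (mul_pos hθ0 hL')) (Nat.ceil_le.2 (mul_le_of_le_one_left hL'.le hθ1.le))
    (ceil_mul_le_floor_mul_add_one hθ0.le hLU)
    ((Nat.floor_lt (by positivity)).2 (mul_lt_of_lt_one_left hU' hθ1))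
    (ceil_sub_one_le_sub_one_mul hℓ L)
  have himage : C.image τ ⊆ O := image_subset_iff.2 hτ.mem
  refine ⟨C.image τ, τ, himage.trans hOF, fun j => mem_image_of_mem τ, ?_, ?_⟩
  · simp only [forall_mem_image]
    intro j hj
    have hlower := (hload _ (hτ.mem j hj)).resolve_left (load_pos hj).ne'
    have hupper : (load C τ (τ j) : ℝ) ≤ U + ⌊(1 - 1 / ℓ) * U⌋₊ :=
      mod_cast hτ.load_le _ (hτ.mem j hj)
    exact ⟨Nat.ceil_le.1 hlower, by linarith [Nat.floor_le (mul_pos hθ0 hU').le]⟩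
  · have himage_cost : ∑ i ∈ C.image τ, f i ≤ ∑ i ∈ O, f i :=
      sum_le_sum_of_subset_of_nonneg himage fun i hi _ => hf i (hOF hi)
    exact (add_le_add_left himage_cost _).trans (hcost.trans
      (roundingFactor_le hℓ (div_floor_add_one_le hℓ U) hG hW))

/-- Tri-criteria rounding: from any feasible fractional LP solution of an
LBUBFL instance with uniform bounds one obtains an integral solution whose loads violate the
lower bound by factor `(1 - 1/ℓ)` and the upper bound by factor `(2 - 1/ℓ)`, of cost at most
`(10ℓ + 4)` times the LP cost. -/
theorem lbubfl_tricriteria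
    (X : Type) [MetricSpace X] [DecidableEq X]
    (F C : Finset X) (f : X → ℝ) (L U : ℕ)
    (hf : ∀ i ∈ F, 0 ≤ f i) (hL : 0 < L) (hLU : L ≤ U)
    (ℓ : ℝ) (hℓ : 2 ≤ ℓ)
    (x : X → X → ℝ) (y : X → ℝ)
    (hx1 : ∀ j ∈ C, 1 ≤ ∑ i ∈ F, x i j)
    (hlb : ∀ i ∈ F, (L : ℝ) * y i ≤ ∑ j ∈ C, x i j)
    (hub : ∀ i ∈ F, ∑ j ∈ C, x i j ≤ (U : ℝ) * y i)
    (hx0 : ∀ i ∈ F, ∀ j ∈ C, 0 ≤ x i j)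
    (hxy : ∀ i ∈ F, ∀ j ∈ C, x i j ≤ y i)
    (hy1 : ∀ i ∈ F, y i ≤ 1) :
    ∃ (F' : Finset X) (σ : X → X), F' ⊆ F ∧ (∀ j ∈ C, σ j ∈ F') ∧
      (∀ i ∈ F', (1 - 1 / ℓ) * (L : ℝ) ≤ ((C.filter (fun j => σ j = i)).card : ℝ) ∧
          ((C.filter (fun j => σ j = i)).card : ℝ) ≤ (2 - 1 / ℓ) * (U : ℝ)) ∧
      (∑ i ∈ F', f i) + (∑ j ∈ C, dist j (σ j)) ≤
        (10 * ℓ + 4) *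
          ((∑ i ∈ F, f i * y i) + ∑ i ∈ F, ∑ j ∈ C, dist i j * x i j) := by
  have h : IsLPSolution F C L U x y := ⟨hx1, hlb, hub, hx0, hxy, hy1⟩
  obtain ⟨F', σ, hF', hσ, hload, hcost⟩ := lbubfl_tricriteria_general hf hL hLU (by linarith) h
  exact ⟨F', σ, hF', hσ, hload, hcost.trans (tricriteriaFactor_le hℓ
    (h.sum_mul_opening_nonneg (hL.trans_le hLU) hf) h.sum_dist_mul_nonneg)⟩
end

section
/- Let X be a metric space, C ⊆ X a finite set, r : C → ℝ with r j ≥ 0 for all j ∈ C, and t > 0 a real number. Then there exists a subset C' ⊆ C such that: (i) for every j ∈ C there is some j' ∈ C' with dist(j, j') ≤ t·r j and r j' ≤ r j; and (ii) for all distinct j', k' ∈ C', dist(j', k') > t·max(r j', r k'). -/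
/-!
Order the points by radius, breaking ties by an arbitrary well-order, and say that `k` blocks `j`
if `k` comes before `j` and `dist j k ≤ t * r j`. Blocking is well-founded, so it has a kernel: a
set of points containing `j` exactly when no point of the set blocks `j`. This is the set the greedy
procedure selects. A point outside the kernel is blocked, hence covered, by an earlier selected
point; of two selected points the later one, whose radius is the maximum, is not blocked by the
other.
-/

theorem exists_kernel_of_wellFoundedOn {α : Type*} {R : α → α → Prop} {s : Set α}
    (hR : s.WellFoundedOn R) :
    ∃ K ⊆ s, ∀ a ∈ s, a ∈ K ↔ ∀ b ∈ K, ¬ R b a := by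
  let selected : s → Prop :=
    WellFounded.fix hR fun a selectedBefore => ∀ b h, ¬ selectedBefore b h
  have selected_iff (a : s) : selected a ↔ ∀ b : s, R b a → ¬ selected b :=
    iff_of_eq (WellFounded.fix_eq hR _ a)
  refine ⟨{a | ∃ h : a ∈ s, selected ⟨a, h⟩}, fun a ⟨ha, _⟩ => ha, fun a ha => ?_⟩
  constructor
  · rintro ⟨_, ha_sel⟩ b ⟨hb, hb_sel⟩ hba
    exact (selected_iff ⟨a, ha⟩).1 ha_sel ⟨b, hb⟩ hba hb_sel
  · intro unblocked
    exact ⟨ha, (selected_iff _).2 fun b hba hb_sel => unblocked b ⟨b.2, hb_sel⟩ hba⟩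

theorem exists_trichotomous_wellFoundedOn_refining {α β : Type*} [LinearOrder β] {f : α → β}
    {s : Set α} (hf : (f '' s).IsWF) :
    ∃ before : α → α → Prop, s.WellFoundedOn before ∧
      (∀ a b, before a b → f a ≤ f b) ∧ ∀ a b, a ≠ b → before a b ∨ before b a := by
  refine ⟨fun a b => Prod.Lex (· < ·) WellOrderingRel (f a, a) (f b, b), ?_, ?_, ?_⟩
  · refine Set.WellFoundedOn.prod_lex_of_wellFoundedOn_fiber ?_ fun _ => ?_
    · exact Set.wellFoundedOn_image.1 hf
    · exact WellOrderingRel.isWellOrder.wf.onFun.wellFoundedOn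
  · intro a b hab
    rcases Prod.lex_def.1 hab with hlt | ⟨heq, _⟩
    · exact hlt.le
    · exact heq.le
  · intro a b hne
    simp only [Prod.lex_def]
    rcases lt_trichotomy (f a) (f b) with hlt | heq | hgt
    · exact .inl (.inl hlt)
    · exact (trichotomous_of WellOrderingRel a b).imp
        (fun h => .inr ⟨heq, h⟩) fun h => .inr ⟨heq.symm, h.resolve_left hne⟩
    · exact .inr (.inl hgt)

theorem greedy_filtering_general {X : Type*} [PseudoMetricSpace X] {C : Set X} {r : X → ℝ}
    (hC : (r '' C).IsWF) (hr : ∀ j ∈ C, 0 ≤ r j) {t : ℝ} (ht : 0 ≤ t) :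
    ∃ C' ⊆ C, (∀ j ∈ C, ∃ j' ∈ C', dist j j' ≤ t * r j ∧ r j' ≤ r j) ∧
      ∀ j' ∈ C', ∀ k' ∈ C', j' ≠ k' → t * max (r j') (r k') < dist j' k' := by
  obtain ⟨before, before_wf, le_of_before, before_total⟩ :=
    exists_trichotomous_wellFoundedOn_refining hC
  let blocks (k j : X) : Prop := before k j ∧ dist j k ≤ t * r j
  have blocks_wf : C.WellFoundedOn blocks := before_wf.mono' fun _ _ _ _ h => h.1
  obtain ⟨C', hC', mem_iff⟩ := exists_kernel_of_wellFoundedOn blocks_wf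
  have separated_of_before {j k : X} (hj : j ∈ C') (hk : k ∈ C') (hkj : before k j) :
      t * max (r j) (r k) < dist j k := by
    rw [max_eq_left (le_of_before k j hkj)]
    exact not_le.1 fun hle => (mem_iff j (hC' hj)).1 hj k hk ⟨hkj, hle⟩
  refine ⟨C', hC', fun j hj => ?_, fun j hj k hk hne => ?_⟩
  · by_cases hjC' : j ∈ C'
    · exact ⟨j, hjC', by simpa only [dist_self] using mul_nonneg ht (hr j hj), le_rfl⟩
    · obtain ⟨k, hk, hkj, hdist⟩ : ∃ k ∈ C', blocks k j := by
        simpa only [mem_iff j hj, not_forall, not_not, exists_prop] using hjC'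
      exact ⟨k, hk, hdist, le_of_before k j hkj⟩
  · rcases before_total j k hne with hjk | hkj
    · rw [max_comm, dist_comm]
      exact separated_of_before hk hj hjk
    · exact separated_of_before hj hk hkj

/-- Greedy filtering: given a finite set `C` of points with nonnegative radii
`r` and a parameter `t > 0`, there is a subset `C' ⊆ C` such that every point of `C` is within
distance `t·r j` of a selected point with no larger radius, and selected points satisfy the
separation property `dist(j', k') > t·max(r j', r k')`. -/
theorem greedy_filtering
    (X : Type) [MetricSpace X]
    (C : Finset X) (r : X → ℝ) (hr : ∀ j ∈ C, 0 ≤ r j)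
    (t : ℝ) (ht : 0 < t) :
    ∃ C' : Finset X, C' ⊆ C ∧
      (∀ j ∈ C, ∃ j' ∈ C', dist j j' ≤ t * r j ∧ r j' ≤ r j) ∧
      (∀ j' ∈ C', ∀ k' ∈ C', j' ≠ k' → t * max (r j') (r k') < dist j' k') := by
  obtain ⟨C', hC', h⟩ := greedy_filtering_general (C.finite_toSet.image r).isWF hr ht.le
  lift C' to Finset X using C.finite_toSet.subset hC'
  exact ⟨C', by exact_mod_cast hC', h⟩
end

section
/- Let X be a metric space, ℓ > 0 real, C' ⊆ X a finite set with radii r : C' → ℝ, r ≥ 0, satisfying the separation property: dist(a, b) > 2ℓ·max(r a, r b) for all distinct a, b ∈ C'. Let j ∈ X with radius r_j ≥ 0, and suppose there exists k' ∈ C' with dist(j, k') ≤ 2ℓ·r_j and r k' ≤ r_j. Let j' ∈ C' satisfy dist(j, j') ≤ ℓ·(r j'). Then r j' ≤ 2·r_j. -/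
section Separation

variable {X : Type*} [PseudoMetricSpace X] {ℓ : ℝ}

theorem lt_two_mul_of_two_mul_mul_lt_dist {ρ σ : ℝ} {x a b : X} (hℓ : 0 < ℓ)
    (hsep : 2 * ℓ * ρ < dist a b) (ha : dist x a ≤ ℓ * ρ) (hb : dist x b ≤ 2 * ℓ * σ) :
    ρ < 2 * σ := by
  have hscaled : 2 * ℓ * ρ < ℓ * ρ + 2 * ℓ * σ :=
    calc 2 * ℓ * ρ < dist a b := hsep
      _ ≤ dist x a + dist x b := dist_triangle_left a b x
      _ ≤ ℓ * ρ + 2 * ℓ * σ := add_le_add ha hb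
  refine lt_of_mul_lt_mul_left (a := ℓ) ?_ hℓ.le
  linarith

theorem center_radius_bound_general (hℓ : 0 < ℓ) {C : Set X} {r : X → ℝ}
    (hsep : C.Pairwise fun a b ↦ 2 * ℓ * max (r a) (r b) < dist a b)
    {x : X} {ρ : ℝ} (hcov : ∃ k ∈ C, dist x k ≤ 2 * ℓ * ρ ∧ r k ≤ ρ)
    {c : X} (hc : c ∈ C) (hclose : dist x c ≤ ℓ * r c) :
    r c ≤ 2 * ρ := by
  obtain ⟨k, hk, hdist, hrk⟩ := hcov
  obtain rfl | hck := eq_or_ne c k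
  · have hρ : 0 ≤ ρ := nonneg_of_mul_nonneg_right (dist_nonneg.trans hdist) (by positivity)
    linarith
  · have hfar : 2 * ℓ * r c < dist c k :=
      calc 2 * ℓ * r c ≤ 2 * ℓ * max (r c) (r k) := by gcongr; exact le_max_left _ _
        _ < dist c k := hsep hc hk hck
    exact (lt_two_mul_of_two_mul_mul_lt_dist hℓ hfar hclose hdist).le

end Separation

/-- Under the separation property of the cluster centers `C'` and the covering
property of client `j`, if the center `j'` satisfies `dist(j, j') ≤ ℓ·r j'`, then
`r j' ≤ 2·r j`. -/
theorem center_radius_bound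
    (X : Type) [MetricSpace X]
    (ℓ : ℝ) (hℓ : 0 < ℓ)
    (C' : Finset X) (r : X → ℝ) (hr : ∀ a ∈ C', 0 ≤ r a)
    (hsep : ∀ a ∈ C', ∀ b ∈ C', a ≠ b → 2 * ℓ * max (r a) (r b) < dist a b)
    (j : X) (rj : ℝ) (hrj : 0 ≤ rj)
    (hcov : ∃ k' ∈ C', dist j k' ≤ 2 * ℓ * rj ∧ r k' ≤ rj)
    (j' : X) (hj' : j' ∈ C')
    (hclose : dist j j' ≤ ℓ * r j') :
    r j' ≤ 2 * rj :=
  center_radius_bound_general hℓ (C := C') (fun a ha b hb ↦ hsep a ha b hb) hcov hj' hclose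
end

section
/- Let X be a metric space, ℓ > 0 real, C' ⊆ X a finite set with radii r : C' → ℝ, r ≥ 0, satisfying the separation property: dist(a, b) > 2ℓ·max(r a, r b) for all distinct a, b ∈ C'. Let j ∈ X with radius r_j ≥ 0, and suppose there exists k' ∈ C' with dist(j, k') ≤ 2ℓ·r_j and r k' ≤ r_j. Let j' ∈ C', let i ∈ X satisfy dist(i, j') ≤ dist(i, k'') for every k'' ∈ C', and let i₀ ∈ X satisfy dist(i₀, j') ≤ ℓ·(r j'). Then dist(i₀, j) ≤ 4·(dist(i, j) + ℓ·r_j). -/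
/-!
Let `k` be the center covering `j`. Since `j'` is at least as close to `i` as `k` is, going from `j`
to `j'` through `i` costs at most `2 * dist i j + dist j k`. The same comparison puts `j'` and `k`
within `2 * dist i k` of each other, so separation bounds `ℓ * r j'` by `dist i k` unless `j' = k`,
where `r j' ≤ rj`.
-/

section NearestCenter

variable {X : Type*} [PseudoMetricSpace X] {C : Set X} {a i j k : X}

theorem dist_le_two_mul_dist_of_dist_le (h : dist i a ≤ dist i k) :
    dist a k ≤ 2 * dist i k := by
  linarith [dist_triangle_left a k i]

theorem dist_le_two_mul_dist_add_dist_of_dist_le (h : dist i a ≤ dist i k) :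
    dist j a ≤ 2 * dist i j + dist j k := by
  linarith [dist_triangle_left j a i, dist_triangle i j k]

theorem radius_le_max_radius_dist_of_dist_le {ρ : X → ℝ}
    (hsep : C.Pairwise fun b c ↦ 2 * ρ b ≤ dist b c) (ha : a ∈ C) (hk : k ∈ C)
    (h : dist i a ≤ dist i k) : ρ a ≤ max (ρ k) (dist i k) := by
  obtain rfl | hak := eq_or_ne a k
  · exact le_max_left _ _
  · have htwo_radius : 2 * ρ a ≤ 2 * dist i k :=
      (hsep ha hk hak).trans (dist_le_two_mul_dist_of_dist_le h)
    exact le_max_of_le_right (by linarith)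

end NearestCenter

theorem sparse_reassignment_bound_general {X : Type*} [PseudoMetricSpace X]
    {ℓ : ℝ} (hℓ : 0 ≤ ℓ) {C : Set X} {r : X → ℝ}
    (hsep : C.Pairwise fun a b ↦ 2 * ℓ * max (r a) (r b) ≤ dist a b)
    {j : X} {rj : ℝ} (hcov : ∃ k ∈ C, dist j k ≤ 2 * ℓ * rj ∧ r k ≤ rj)
    {j' : X} (hj' : j' ∈ C) {i : X} (hi : ∀ k ∈ C, dist i j' ≤ dist i k)
    {i₀ : X} (hi₀ : dist i₀ j' ≤ ℓ * r j') :
    dist i₀ j ≤ 3 * dist i j + 4 * (ℓ * rj) := by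
  obtain ⟨k, hk, hjk, hrk⟩ := hcov
  have hsep_radius : C.Pairwise fun a b ↦ 2 * (ℓ * r a) ≤ dist a b := by
    intro a ha b hb hab
    calc 2 * (ℓ * r a) = 2 * ℓ * r a := by ring
      _ ≤ 2 * ℓ * max (r a) (r b) := by gcongr; exact le_max_left _ _
      _ ≤ dist a b := hsep ha hb hab
  have hk_radius : ℓ * r k ≤ dist i j + 2 * ℓ * rj := by
    have : ℓ * r k ≤ ℓ * rj := by gcongr
    linarith [dist_nonneg (x := i) (y := j), dist_nonneg (x := j) (y := k)]
  have hik : dist i k ≤ dist i j + 2 * ℓ * rj := by linarith [dist_triangle i j k]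
  have hj'_radius : ℓ * r j' ≤ dist i j + 2 * ℓ * rj :=
    (radius_le_max_radius_dist_of_dist_le hsep_radius hj' hk (hi k hk)).trans
      (max_le hk_radius hik)
  have hjj' : dist j j' ≤ 2 * dist i j + dist j k :=
    dist_le_two_mul_dist_add_dist_of_dist_le (hi k hk)
  linarith [dist_triangle_right i₀ j j']

/-- Under the separation property of the cluster centers `C'` and the covering
property of client `j`, if `i` lies in the cluster of `j'` (i.e. `j'` is a nearest center to
`i`) and `i₀` lies in the ball of radius `ℓ·r j'` around `j'`, then
`dist(i₀, j) ≤ 4·(dist(i, j) + ℓ·r j)`. -/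
theorem sparse_reassignment_bound
    (X : Type) [MetricSpace X]
    (ℓ : ℝ) (hℓ : 0 < ℓ)
    (C' : Finset X) (r : X → ℝ) (hr : ∀ a ∈ C', 0 ≤ r a)
    (hsep : ∀ a ∈ C', ∀ b ∈ C', a ≠ b → 2 * ℓ * max (r a) (r b) < dist a b)
    (j : X) (rj : ℝ) (hrj : 0 ≤ rj)
    (hcov : ∃ k' ∈ C', dist j k' ≤ 2 * ℓ * rj ∧ r k' ≤ rj)
    (j' : X) (hj' : j' ∈ C')
    (i : X) (hi : ∀ k'' ∈ C', dist i j' ≤ dist i k'')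
    (i₀ : X) (hi₀ : dist i₀ j' ≤ ℓ * r j') :
    dist i₀ j ≤ 4 * (dist i j + ℓ * rj) := by
  linarith [dist_nonneg (x := i) (y := j), sparse_reassignment_bound_general hℓ.le
    (C := C') (fun a ha b hb hab ↦ (hsep a ha b hb hab).le) hcov hj' hi hi₀]
end

section
/- Let an LBUBFL instance with uniform bounds be given together with a feasible fractional LP solution (x*, y*) and a real parameter ℓ ≥ 2. Let C' ⊆ C with radii Ĉ (where Ĉ_j = Σ_{i∈F} dist(i,j)·x* i j) satisfy the separation property (dist(j',k') > 2ℓ·max(Ĉ_{j'}, Ĉ_{k'}) for distinct j',k' ∈ C') and the covering property (every j ∈ C has some k' ∈ C' with dist(j,k') ≤ 2ℓ·Ĉ_j and Ĉ_{k'} ≤ Ĉ_j). For j' ∈ C' let N_{j'} = { i ∈ F : dist(i,j') ≤ dist(i,k') for all k' ∈ C' }, and assume the sets N_{j'} partition F. For j ∈ C, j' ∈ C' define φ(j,j') = Σ_{i ∈ N_{j'}} x* i j and d_{j'} = Σ_{j∈C} φ(j,j'); call j' sparse if d_{j'} ≤ U and dense otherwise; let C_S and C_D be the sets of sparse and dense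 centers. Then there exist x̂ : F → C → ℝ with x̂ ≥ 0 and ŷ : F → ℝ such that: for every sparse j' there is a facility i(j') ∈ N_{j'} with dist(i(j'), j') ≤ ℓ·Ĉ_{j'}, ŷ_{i(j')} = 1, ŷ_i = 0 and x̂ i j = 0 for all other i ∈ N_{j'} and all j ∈ C, and Σ_{j∈C} x̂ (i(j')) j = d_{j'} ≥ (1 − 1/ℓ)·L; for every dense j' and i ∈ N_{j'}, ŷ_i = y*_i and x̂ i j = x* i j for all j; and Σ_{i∈F} [f_i·ŷ_i + Σ_{j∈C} x̂ i j · dist(i,j)] ≤ Σ_{j'∈C_S} [ (ℓ/(ℓ−1))·Σ_{i∈N_{j'}} f_i·y*_i + 4·Σ_{i∈N_{j'}} Σ_{j∈C} x* i j ·(dist(i,j) + ℓ·Ĉ_j) ] + Σ_{j'∈C_D} Σ_{i∈N_{j'}} [ f_i·y*_i + Σ_{j∈C} x* i j · dist(i,j) ]. -/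
open Finset

/-- The cluster of facilities of `F` whose nearest center in `C'` is `j'`. -/
noncomputable def cluster {X : Type} [MetricSpace X] (F C' : Finset X) (j' : X) : Finset X :=
  F.filter (fun i => ∀ k' ∈ C', dist i j' ≤ dist i k')

/-- Total (fractional) demand `d_{j'}` served inside the cluster of `j'`. -/
noncomputable def clusterDemand {X : Type} [MetricSpace X]
    (F C C' : Finset X) (x : X → X → ℝ) (j' : X) : ℝ :=
  ∑ j ∈ C, ∑ i ∈ cluster F C' j', x i j

/-!
By Markov's inequality at least a `1 - 1/ℓ` fraction of the assignment of a center `j'` goes to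
facilities within `ℓ * Ĉ_{j'}`, and by separation these all lie in the cluster of `j'`. Since
`x ≤ y`, that cluster has opening mass at least `1 - 1/ℓ`; the lower bounds on the open facilities
then give the demand bound, and the cheapest nearby facility costs at most `ℓ/(ℓ-1)` times the
fractional opening cost. Moving all demand of the cluster to this facility `i₀` is cheap: if `i` in
the cluster of `j'` serves `j`, and `k'` is the center covering `j`, then
`dist i j' ≤ dist i k' ≤ dist i j + 2 * ℓ * Ĉ_j`, while `ℓ * Ĉ_{j'}`, which bounds `dist i₀ j'`, is
at most `ℓ * Ĉ_j` if `j' = k'`, and at most half of `dist j' k' ≤ dist i j' + dist i k'` otherwise.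
-/

section WeightedSums

variable {ι 𝕜 : Type*} [Field 𝕜] [LinearOrder 𝕜] [IsStrictOrderedRing 𝕜]
  {s : Finset ι} {d f w : ι → 𝕜} {c m : 𝕜}

theorem sum_filter_mul_sum_lt_le_one_div (hd : ∀ i ∈ s, 0 ≤ d i) (hw : ∀ i ∈ s, 0 ≤ w i)
    (hc : 0 < c) : ∑ i ∈ s with c * ∑ k ∈ s, d k * w k < d i, w i ≤ 1 / c := by
  have hdw : ∀ i ∈ s, 0 ≤ d i * w i := fun i hi => mul_nonneg (hd i hi) (hw i hi)
  set μ := ∑ k ∈ s, d k * w k with hμ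
  rcases (sum_nonneg hdw : 0 ≤ μ).eq_or_lt with hμ0 | hμpos
  · have hzero : ∀ i ∈ s.filter (fun i => c * μ < d i), w i = 0 := by
      intro i hi
      obtain ⟨his, hlt⟩ := mem_filter.1 hi
      rw [hμ, ← hμ0, mul_zero] at hlt
      exact (mul_eq_zero.1 ((sum_eq_zero_iff_of_nonneg hdw).1 hμ0.symm i his)).resolve_left hlt.ne'
    rw [sum_eq_zero hzero]
    positivity
  · have hfar : μ * (c * ∑ i ∈ s with c * μ < d i, w i) ≤ μ * 1 := calc
      μ * (c * ∑ i ∈ s with c * μ < d i, w i) = ∑ i ∈ s with c * μ < d i, c * μ * w i := by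
        rw [← mul_sum]; ring
      _ ≤ ∑ i ∈ s with c * μ < d i, d i * w i := sum_le_sum fun i hi =>
        mul_le_mul_of_nonneg_right (mem_filter.1 hi).2.le (hw i (mem_filter.1 hi).1)
      _ ≤ μ * 1 := by
        rw [mul_one]
        exact sum_le_sum_of_subset_of_nonneg (filter_subset _ _) fun i hi _ => hdw i hi
    rw [le_div_iff₀' hc]
    exact le_of_mul_le_mul_left hfar hμpos

theorem one_sub_one_div_le_sum_filter_le_mul_sum (hd : ∀ i ∈ s, 0 ≤ d i) (hw : ∀ i ∈ s, 0 ≤ w i)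
    (hw1 : 1 ≤ ∑ i ∈ s, w i) (hc : 0 < c) :
    1 - 1 / c ≤ ∑ i ∈ s with d i ≤ c * ∑ k ∈ s, d k * w k, w i := by
  have hfar := sum_filter_mul_sum_lt_le_one_div hd hw hc
  have hsplit := sum_filter_add_sum_filter_not s (fun i => d i ≤ c * ∑ k ∈ s, d k * w k) w
  simp only [not_le] at hsplit
  linarith

theorem exists_mul_le_sum_mul (hf : ∀ i ∈ s, 0 ≤ f i) (hw : ∀ i ∈ s, 0 ≤ w i) (hm : 0 < m)
    (hmw : m ≤ ∑ i ∈ s, w i) : ∃ i ∈ s, f i * m ≤ ∑ k ∈ s, f k * w k := by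
  have hs : s.Nonempty := nonempty_of_sum_ne_zero (hm.trans_le hmw).ne'
  obtain ⟨i, hi, hmin⟩ := exists_min_image s f hs
  refine ⟨i, hi, ?_⟩
  calc f i * m ≤ f i * ∑ k ∈ s, w k := mul_le_mul_of_nonneg_left hmw (hf i hi)
    _ = ∑ k ∈ s, f i * w k := mul_sum ..
    _ ≤ ∑ k ∈ s, f k * w k :=
      sum_le_sum fun k hk => mul_le_mul_of_nonneg_right (hmin k hk) (hw k hk)

end WeightedSums

section FractionalSolutions

variable {X : Type*} [PseudoMetricSpace X]

/-- The fractional connection cost `Ĉ_j` of the client `j` under the assignment `x`. -/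
def connectionCost (F : Finset X) (x : X → X → ℝ) (j : X) : ℝ :=
  ∑ i ∈ F, dist i j * x i j

/-- The facilities within `ℓ` times the connection cost of the client `j`: the candidates for being
opened in the cluster of `j`. -/
noncomputable def nearFacilities (F : Finset X) (x : X → X → ℝ) (ℓ : ℝ) (j : X) : Finset X :=
  F.filter fun i => dist i j ≤ ℓ * connectionCost F x j

/-- The part of the cost of the solution `(x, y)` that is incurred by the facilities in `N`: opening
cost plus connection cost of the clients in `C`. -/
def solutionCost (N C : Finset X) (f : X → ℝ) (x : X → X → ℝ) (y : X → ℝ) : ℝ :=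
  ∑ i ∈ N, (f i * y i + ∑ j ∈ C, x i j * dist i j)

/-- The solution `(xhat, yhat)` restricted to the facilities in `N` opens only `i₀`, integrally, and
assigns to it everything that `x` assigns to `N`. -/
structure IsConcentratedAt (N C : Finset X) (x xhat : X → X → ℝ) (yhat : X → ℝ) (i₀ : X) :
    Prop where
  opening_eq_one : yhat i₀ = 1
  eq_zero_of_ne : ∀ i ∈ N, i ≠ i₀ → yhat i = 0 ∧ ∀ j ∈ C, xhat i j = 0
  assignment_eq_sum : ∀ j ∈ C, xhat i₀ j = ∑ i ∈ N, x i j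

variable {F N C : Finset X} {f y yhat : X → ℝ} {x xhat : X → X → ℝ} {i₀ j : X} {L ℓ : ℝ}

theorem nearFacilities_subset : nearFacilities F x ℓ j ⊆ F := filter_subset _ _

theorem one_sub_one_div_le_sum_nearFacilities (hℓ : 0 < ℓ) (hx0 : ∀ i ∈ F, 0 ≤ x i j)
    (hxy : ∀ i ∈ F, x i j ≤ y i) (hx1 : 1 ≤ ∑ i ∈ F, x i j) :
    1 - 1 / ℓ ≤ ∑ i ∈ nearFacilities F x ℓ j, y i :=
  (one_sub_one_div_le_sum_filter_le_mul_sum (fun _ _ => dist_nonneg) hx0 hx1 hℓ).trans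
    (sum_le_sum fun i hi => hxy i (nearFacilities_subset hi))

theorem exists_mem_nearFacilities_opening_le (hℓ : 1 < ℓ) (hf : ∀ i ∈ F, 0 ≤ f i)
    (hx0 : ∀ i ∈ F, 0 ≤ x i j) (hxy : ∀ i ∈ F, x i j ≤ y i) (hx1 : 1 ≤ ∑ i ∈ F, x i j)
    (hnear : nearFacilities F x ℓ j ⊆ N) (hNF : N ⊆ F) :
    ∃ i ∈ nearFacilities F x ℓ j, f i ≤ ℓ / (ℓ - 1) * ∑ k ∈ N, f k * y k := by
  have hy0 : ∀ i ∈ F, 0 ≤ y i := fun i hi => (hx0 i hi).trans (hxy i hi)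
  have hℓ0 : 0 < ℓ := one_pos.trans hℓ
  have hmass : 0 < 1 - 1 / ℓ := sub_pos.2 ((div_lt_one hℓ0).2 hℓ)
  obtain ⟨i, hi, hle⟩ := exists_mul_le_sum_mul
    (fun i hi => hf i (nearFacilities_subset hi)) (fun i hi => hy0 i (nearFacilities_subset hi))
    hmass (one_sub_one_div_le_sum_nearFacilities hℓ0 hx0 hxy hx1)
  refine ⟨i, hi, ?_⟩
  have hmono : ∑ k ∈ nearFacilities F x ℓ j, f k * y k ≤ ∑ k ∈ N, f k * y k :=
    sum_le_sum_of_subset_of_nonneg hnear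
      fun k hk _ => mul_nonneg (hf k (hNF hk)) (hy0 k (hNF hk))
  calc f i = f i * (1 - 1 / ℓ) / (1 - 1 / ℓ) := (mul_div_cancel_right₀ _ hmass.ne').symm
    _ ≤ (∑ k ∈ N, f k * y k) / (1 - 1 / ℓ) :=
      div_le_div_of_nonneg_right (hle.trans hmono) hmass.le
    _ = ℓ / (ℓ - 1) * ∑ k ∈ N, f k * y k := by
      rw [one_sub_div hℓ0.ne', div_div_eq_mul_div]; ring

theorem one_sub_one_div_mul_le_demand (hℓ : 0 < ℓ) (hL : 0 ≤ L) (hx0 : ∀ i ∈ F, 0 ≤ x i j)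
    (hxy : ∀ i ∈ F, x i j ≤ y i) (hx1 : 1 ≤ ∑ i ∈ F, x i j)
    (hlb : ∀ i ∈ F, L * y i ≤ ∑ k ∈ C, x i k)
    (hnear : nearFacilities F x ℓ j ⊆ N) (hNF : N ⊆ F) :
    (1 - 1 / ℓ) * L ≤ ∑ k ∈ C, ∑ i ∈ N, x i k := by
  have hmass : 1 - 1 / ℓ ≤ ∑ i ∈ N, y i :=
    (one_sub_one_div_le_sum_nearFacilities hℓ hx0 hxy hx1).trans <|
      sum_le_sum_of_subset_of_nonneg hnear
        fun i hi _ => (hx0 i (hNF hi)).trans (hxy i (hNF hi))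
  calc (1 - 1 / ℓ) * L ≤ (∑ i ∈ N, y i) * L := mul_le_mul_of_nonneg_right hmass hL
    _ = ∑ i ∈ N, L * y i := by rw [mul_comm, mul_sum]
    _ ≤ ∑ i ∈ N, ∑ k ∈ C, x i k := sum_le_sum fun i hi => hlb i (hNF hi)
    _ = ∑ k ∈ C, ∑ i ∈ N, x i k := sum_comm

theorem solutionCost_congr (h : ∀ i ∈ N, yhat i = y i ∧ ∀ j ∈ C, xhat i j = x i j) :
    solutionCost N C f xhat yhat = solutionCost N C f x y :=
  sum_congr rfl fun i hi => by
    rw [(h i hi).1, sum_congr rfl fun j hj => by rw [(h i hi).2 j hj]]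

theorem IsConcentratedAt.solutionCost_eq (h : IsConcentratedAt N C x xhat yhat i₀) (hi₀ : i₀ ∈ N) :
    solutionCost N C f xhat yhat = f i₀ + ∑ i ∈ N, ∑ j ∈ C, x i j * dist i₀ j := by
  have hclosed : ∀ i ∈ N, i ≠ i₀ → f i * yhat i + ∑ j ∈ C, xhat i j * dist i j = 0 := by
    intro i hi hne
    obtain ⟨hy, hx⟩ := h.eq_zero_of_ne i hi hne
    rw [hy, mul_zero, zero_add, sum_eq_zero fun j hj => by rw [hx j hj, zero_mul]]
  rw [solutionCost, sum_eq_single_of_mem i₀ hi₀ hclosed, h.opening_eq_one, mul_one, sum_comm,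
    sum_congr rfl fun j hj => by rw [h.assignment_eq_sum j hj, sum_mul]]

end FractionalSolutions

section Clusters

variable {X : Type} [MetricSpace X] {F C C' : Finset X} {r : X → ℝ} {i i₀ j j' : X}

theorem cluster_subset : cluster F C' j' ⊆ F := filter_subset _ _

theorem mem_cluster_of_dist_le (hsep : (C' : Set X).Pairwise fun j' k' => 2 * r j' ≤ dist j' k')
    (hj' : j' ∈ C') (hi : i ∈ F) (hij' : dist i j' ≤ r j') : i ∈ cluster F C' j' := by
  refine mem_filter.2 ⟨hi, fun k' hk' => ?_⟩
  rcases eq_or_ne j' k' with rfl | hne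
  · rfl
  · linarith [hsep hj' hk' hne, dist_triangle_left j' k' i]

theorem dist_le_of_mem_cluster (hsep : (C' : Set X).Pairwise fun j' k' => 2 * r j' ≤ dist j' k')
    (hcov : ∃ k' ∈ C', dist j k' ≤ 2 * r j ∧ r k' ≤ r j)
    (hj' : j' ∈ C') (hi : i ∈ cluster F C' j') (hi₀ : dist i₀ j' ≤ r j') :
    dist i₀ j ≤ 4 * (dist i j + r j) := by
  obtain ⟨k', hk', hjk', hr⟩ := hcov
  have hik' : dist i k' ≤ dist i j + 2 * r j := (dist_triangle i j k').trans (by gcongr)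
  have hij' : dist i j' ≤ dist i j + 2 * r j := ((mem_filter.1 hi).2 k' hk').trans hik'
  have hr_le : r j' ≤ dist i j + 2 * r j := by
    rcases eq_or_ne j' k' with rfl | hne
    · linarith [dist_nonneg (x := i) (y := j), dist_nonneg (x := j) (y := j')]
    · linarith [hsep hj' hk' hne, dist_triangle_left j' k' i]
  calc dist i₀ j ≤ dist i₀ j' + dist j' j := dist_triangle ..
    _ ≤ r j' + (dist i j' + dist i j) := add_le_add hi₀ (dist_triangle_left ..)
    _ ≤ 4 * (dist i j + r j) := by linarith [dist_nonneg (x := i) (y := j)]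

theorem exists_eq_on_cluster {α : Type*}
    (hpart : ∀ i ∈ F, ∃! j' : X, j' ∈ C' ∧ i ∈ cluster F C' j') (g : X → X → α) :
    ∃ h : X → α, ∀ j' ∈ C', ∀ i ∈ cluster F C' j', h i = g j' i := by
  choose! center _ hunique using hpart
  refine ⟨fun i => g (center i) i, fun j' hj' i hi => ?_⟩
  rw [hunique i (cluster_subset hi) j' ⟨hj', hi⟩]

theorem sum_eq_sum_sum_cluster {M : Type*} [AddCommMonoid M]
    (hpart : ∀ i ∈ F, ∃! j' : X, j' ∈ C' ∧ i ∈ cluster F C' j') (g : X → M) :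
    ∑ i ∈ F, g i = ∑ j' ∈ C', ∑ i ∈ cluster F C' j', g i := by
  choose! center hcenter hunique using hpart
  classical
  rw [← sum_fiberwise_of_maps_to (fun i hi => (hcenter i hi).1) g]
  refine sum_congr rfl fun j' hj' => sum_congr (ext fun i => ?_) fun _ _ => rfl
  rw [mem_filter]
  constructor
  · rintro ⟨hi, rfl⟩
    exact (hcenter i hi).2
  · exact fun hi => ⟨cluster_subset hi, (hunique i (cluster_subset hi) j' ⟨hj', hi⟩).symm⟩

theorem exists_concentrated_on_clusters {x : X → X → ℝ} (y : X → ℝ) (i₀ : X → X) (P : X → Prop)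
    (hpart : ∀ i ∈ F, ∃! j' : X, j' ∈ C' ∧ i ∈ cluster F C' j')
    (hx0 : ∀ i ∈ F, ∀ j ∈ C, 0 ≤ x i j) (hi₀ : ∀ j' ∈ C', i₀ j' ∈ cluster F C' j') :
    ∃ (xhat : X → X → ℝ) (yhat : X → ℝ), (∀ i j, 0 ≤ xhat i j) ∧
      (∀ j' ∈ C', P j' → IsConcentratedAt (cluster F C' j') C x xhat yhat (i₀ j')) ∧
      ∀ j' ∈ C', ¬ P j' → ∀ i ∈ cluster F C' j', yhat i = y i ∧ ∀ j ∈ C, xhat i j = x i j := by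
  classical
  obtain ⟨xglued, hx⟩ := exists_eq_on_cluster hpart fun j' i j =>
    if P j' then if i = i₀ j' then ∑ k ∈ cluster F C' j', x k j else 0 else x i j
  obtain ⟨yhat, hy⟩ := exists_eq_on_cluster hpart fun j' i =>
    if P j' then if i = i₀ j' then 1 else 0 else y i
  -- The truncation at `0` only matters off `F × C`, where nothing is known about the sign of `x`.
  refine ⟨fun i j => max (xglued i j) 0, yhat, fun i j => le_max_right _ _,
    fun j' hj' hP => ⟨?_, fun i hi hne => ⟨?_, fun j _ => ?_⟩, fun j hj => ?_⟩,
    fun j' hj' hP i hi => ⟨?_, fun j hj => ?_⟩⟩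
  · rw [hy j' hj' _ (hi₀ j' hj'), if_pos hP, if_pos rfl]
  · rw [hy j' hj' i hi, if_pos hP, if_neg hne]
  · simp only [hx j' hj' i hi, if_pos hP, if_neg hne, max_self]
  · simp only [hx j' hj' _ (hi₀ j' hj'), if_pos hP, if_true]
    exact max_eq_left (sum_nonneg fun k hk => hx0 k (cluster_subset hk) j hj)
  · rw [hy j' hj' i hi, if_neg hP]
  · simp only [hx j' hj' i hi, if_neg hP]
    exact max_eq_left (hx0 i (cluster_subset hi) j hj)

theorem IsConcentratedAt.solutionCost_cluster_le {f yhat : X → ℝ} {x xhat : X → X → ℝ} {B : ℝ}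
    (h : IsConcentratedAt (cluster F C' j') C x xhat yhat i₀)
    (hsep : (C' : Set X).Pairwise fun j' k' => 2 * r j' ≤ dist j' k')
    (hcov : ∀ j ∈ C, ∃ k' ∈ C', dist j k' ≤ 2 * r j ∧ r k' ≤ r j)
    (hx0 : ∀ i ∈ F, ∀ j ∈ C, 0 ≤ x i j) (hj' : j' ∈ C') (hi₀ : i₀ ∈ cluster F C' j')
    (hdist : dist i₀ j' ≤ r j') (hopen : f i₀ ≤ B) :
    solutionCost (cluster F C' j') C f xhat yhat ≤
      B + 4 * ∑ i ∈ cluster F C' j', ∑ j ∈ C, x i j * (dist i j + r j) := by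
  rw [h.solutionCost_eq hi₀]
  simp only [mul_sum, mul_left_comm (4 : ℝ)]
  exact add_le_add hopen <| sum_le_sum fun i hi => sum_le_sum fun j hj =>
    mul_le_mul_of_nonneg_left (dist_le_of_mem_cluster hsep (hcov j hj) hj' hi hdist)
      (hx0 i (cluster_subset hi) j hj)

end Clusters

theorem sparse_clusters_rounding_general {X : Type} [MetricSpace X] {F C C' : Finset X}
    {f y : X → ℝ} {x : X → X → ℝ} {L ℓ : ℝ} (P : X → Prop) [DecidablePred P]
    (hf : ∀ i ∈ F, 0 ≤ f i) (hL : 0 ≤ L) (hx1 : ∀ j ∈ C, 1 ≤ ∑ i ∈ F, x i j)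
    (hlb : ∀ i ∈ F, L * y i ≤ ∑ j ∈ C, x i j)
    (hx0 : ∀ i ∈ F, ∀ j ∈ C, 0 ≤ x i j) (hxy : ∀ i ∈ F, ∀ j ∈ C, x i j ≤ y i)
    (hℓ : 1 < ℓ) (hC' : C' ⊆ C)
    (hsep : (C' : Set X).Pairwise fun j' k' => 2 * (ℓ * connectionCost F x j') ≤ dist j' k')
    (hcov : ∀ j ∈ C, ∃ k' ∈ C', dist j k' ≤ 2 * (ℓ * connectionCost F x j) ∧
      connectionCost F x k' ≤ connectionCost F x j)
    (hpart : ∀ i ∈ F, ∃! j' : X, j' ∈ C' ∧ i ∈ cluster F C' j') :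
    ∃ (xhat : X → X → ℝ) (yhat : X → ℝ),
      (∀ i j : X, 0 ≤ xhat i j) ∧
      (∀ j' ∈ C'.filter P, ∃ i₀ ∈ cluster F C' j',
        dist i₀ j' ≤ ℓ * connectionCost F x j' ∧
        yhat i₀ = 1 ∧
        (∀ i ∈ cluster F C' j', i ≠ i₀ → yhat i = 0 ∧ ∀ j ∈ C, xhat i j = 0) ∧
        ∑ j ∈ C, xhat i₀ j = clusterDemand F C C' x j' ∧
        (1 - 1 / ℓ) * L ≤ clusterDemand F C C' x j') ∧
      (∀ j' ∈ C'.filter fun j' => ¬ P j',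
        ∀ i ∈ cluster F C' j', yhat i = y i ∧ ∀ j ∈ C, xhat i j = x i j) ∧
      solutionCost F C f xhat yhat ≤
        ∑ j' ∈ C'.filter P,
          (ℓ / (ℓ - 1) * ∑ i ∈ cluster F C' j', f i * y i +
            4 * ∑ i ∈ cluster F C' j', ∑ j ∈ C, x i j * (dist i j + ℓ * connectionCost F x j)) +
        ∑ j' ∈ C'.filter fun j' => ¬ P j', solutionCost (cluster F C' j') C f x y := by
  have hℓ0 : 0 < ℓ := one_pos.trans hℓ
  have hnear : ∀ j' ∈ C', nearFacilities F x ℓ j' ⊆ cluster F C' j' := fun j' hj' i hi =>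
    mem_cluster_of_dist_le hsep hj' (nearFacilities_subset hi) (mem_filter.1 hi).2
  have hcov' : ∀ j ∈ C, ∃ k' ∈ C', dist j k' ≤ 2 * (ℓ * connectionCost F x j) ∧
      ℓ * connectionCost F x k' ≤ ℓ * connectionCost F x j := fun j hj =>
    (hcov j hj).imp fun _ h => ⟨h.1, h.2.1, mul_le_mul_of_nonneg_left h.2.2 hℓ0.le⟩
  choose! i₀ hi₀ hopen using fun j' (hj' : j' ∈ C') =>
    exists_mem_nearFacilities_opening_le hℓ hf (fun i hi => hx0 i hi j' (hC' hj'))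
      (fun i hi => hxy i hi j' (hC' hj')) (hx1 j' (hC' hj')) (hnear j' hj') cluster_subset
  have hdist : ∀ j' ∈ C', dist (i₀ j') j' ≤ ℓ * connectionCost F x j' := fun j' hj' =>
    (mem_filter.1 (hi₀ j' hj')).2
  have hmem : ∀ j' ∈ C', i₀ j' ∈ cluster F C' j' := fun j' hj' => hnear j' hj' (hi₀ j' hj')
  obtain ⟨xhat, yhat, hnonneg, hconc, hkeep⟩ :=
    exists_concentrated_on_clusters y i₀ P hpart hx0 hmem
  simp only [mem_filter, and_imp]
  refine ⟨xhat, yhat, hnonneg, fun j' hj' hP => ?_, hkeep, ?_⟩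
  · have h := hconc j' hj' hP
    exact ⟨i₀ j', hmem j' hj', hdist j' hj', h.opening_eq_one, h.eq_zero_of_ne,
      sum_congr rfl h.assignment_eq_sum,
      one_sub_one_div_mul_le_demand hℓ0 hL (fun i hi => hx0 i hi j' (hC' hj'))
        (fun i hi => hxy i hi j' (hC' hj')) (hx1 j' (hC' hj')) hlb (hnear j' hj') cluster_subset⟩
  · rw [solutionCost, sum_eq_sum_sum_cluster hpart, ← sum_filter_add_sum_filter_not C' P]
    refine add_le_add (sum_le_sum fun j' hj' => ?_) (sum_congr rfl fun j' hj' => ?_).le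
    · obtain ⟨hj', hP⟩ := mem_filter.1 hj'
      exact (hconc j' hj' hP).solutionCost_cluster_le hsep hcov' hx0 hj' (hmem j' hj')
        (hdist j' hj') (hopen j' hj')
    · obtain ⟨hj', hP⟩ := mem_filter.1 hj'
      exact solutionCost_congr (hkeep j' hj' hP)

/-- Opening one facility integrally in each sparse cluster: from the feasible
fractional LP solution `(x*, y*)` of an LBUBFL instance with uniform bounds one obtains a
solution `(xhat, yhat)` in which every sparse cluster has exactly one (integrally) opened facility
`i(j')` within distance `ℓ·Ĉ_{j'}` of its center carrying the whole demand `d_{j'} ≥ (1-1/ℓ)·L`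
of the cluster, dense clusters are untouched, and the stated cost bound holds. -/
theorem sparse_clusters_rounding
    (X : Type) [MetricSpace X]
    (F C : Finset X) (f : X → ℝ) (L U : ℕ)
    (hf : ∀ i ∈ F, 0 ≤ f i) (hL : 0 < L) (hLU : L ≤ U)
    (x : X → X → ℝ) (y : X → ℝ)
    (hx1 : ∀ j ∈ C, 1 ≤ ∑ i ∈ F, x i j)
    (hlb : ∀ i ∈ F, (L : ℝ) * y i ≤ ∑ j ∈ C, x i j)
    (hub : ∀ i ∈ F, ∑ j ∈ C, x i j ≤ (U : ℝ) * y i)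
    (hx0 : ∀ i ∈ F, ∀ j ∈ C, 0 ≤ x i j)
    (hxy : ∀ i ∈ F, ∀ j ∈ C, x i j ≤ y i)
    (hy1 : ∀ i ∈ F, y i ≤ 1)
    (ℓ : ℝ) (hℓ : 2 ≤ ℓ)
    (C' : Finset X) (hC'sub : C' ⊆ C)
    (hsep : ∀ j' ∈ C', ∀ k' ∈ C', j' ≠ k' →
      2 * ℓ * max (∑ i ∈ F, dist i j' * x i j') (∑ i ∈ F, dist i k' * x i k') < dist j' k')
    (hcov : ∀ j ∈ C, ∃ k' ∈ C',
      dist j k' ≤ 2 * ℓ * ∑ i ∈ F, dist i j * x i j ∧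
      (∑ i ∈ F, dist i k' * x i k') ≤ ∑ i ∈ F, dist i j * x i j)
    (hpart : ∀ i ∈ F, ∃! j' : X, j' ∈ C' ∧ i ∈ cluster F C' j') :
    ∃ (xhat : X → X → ℝ) (yhat : X → ℝ),
      (∀ i j : X, 0 ≤ xhat i j) ∧
      (∀ j' ∈ C'.filter (fun j' => clusterDemand F C C' x j' ≤ (U : ℝ)),
        ∃ i₀ ∈ cluster F C' j',
          dist i₀ j' ≤ ℓ * ∑ i ∈ F, dist i j' * x i j' ∧
          yhat i₀ = 1 ∧
          (∀ i ∈ cluster F C' j', i ≠ i₀ → yhat i = 0 ∧ ∀ j ∈ C, xhat i j = 0) ∧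
          (∑ j ∈ C, xhat i₀ j = clusterDemand F C C' x j') ∧
          (1 - 1 / ℓ) * (L : ℝ) ≤ clusterDemand F C C' x j') ∧
      (∀ j' ∈ C'.filter (fun j' => ¬ clusterDemand F C C' x j' ≤ (U : ℝ)),
        ∀ i ∈ cluster F C' j', yhat i = y i ∧ ∀ j ∈ C, xhat i j = x i j) ∧
      (∑ i ∈ F, (f i * yhat i + ∑ j ∈ C, xhat i j * dist i j) ≤
        (∑ j' ∈ C'.filter (fun j' => clusterDemand F C C' x j' ≤ (U : ℝ)),
          ((ℓ / (ℓ - 1)) * ∑ i ∈ cluster F C' j', f i * y i +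
            4 * ∑ i ∈ cluster F C' j', ∑ j ∈ C,
              x i j * (dist i j + ℓ * ∑ i' ∈ F, dist i' j * x i' j))) +
        ∑ j' ∈ C'.filter (fun j' => ¬ clusterDemand F C C' x j' ≤ (U : ℝ)),
          ∑ i ∈ cluster F C' j', (f i * y i + ∑ j ∈ C, x i j * dist i j)) := by
  simp only [mul_assoc (2 : ℝ)] at hsep hcov
  exact sparse_clusters_rounding_general (fun j' => clusterDemand F C C' x j' ≤ (U : ℝ))
    hf L.cast_nonneg hx1 hlb hx0 hxy (one_lt_two.trans_le hℓ) hC'sub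
    (fun j' hj' k' hk' hne =>
      le_trans (by gcongr; exact le_max_left _ _) (hsep j' hj' k' hk' hne).le)
    hcov hpart
end

section
/- Let ι be a finite set, w : ι → ℝ with w i ≥ 0 for all i, and z : ι → ℝ with 0 ≤ z i ≤ 1 for all i. Then there exists z' : ι → ℝ with 0 ≤ z' i ≤ 1 for all i, Σ_{i∈ι} z' i = Σ_{i∈ι} z i, Σ_{i∈ι} w i · z' i ≤ Σ_{i∈ι} w i · z i, and at most one index i with 0 < z' i < 1. -/
/-!
Among the vectors of the box with the given total mass and at most the given cost, take one whose
set of fractional coordinates is minimal. If it had two fractional coordinates `i ≠ j`, say with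
`w i ≤ w j`, moving mass from `j` to `i` until one of them reaches its bound would preserve the
total, not increase the cost, and make one coordinate fewer fractional.
-/

open Set

section Transfer

variable {ι G : Type*} [AddCommGroup G]

/-- The vector obtained from `z` by moving the mass `t` from coordinate `j` to coordinate `i`;
it is `z` itself when `i = j`. -/
def transfer [DecidableEq ι] (z : ι → G) (i j : ι) (t : G) : ι → G :=
  z + Pi.single i t - Pi.single j t

section Apply

variable [DecidableEq ι] (z : ι → G) {i j : ι} (t : G)

lemma transfer_apply_target (hij : i ≠ j) : transfer z i j t i = z i + t := by
  simp [transfer, hij]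

lemma transfer_apply_source (hij : i ≠ j) : transfer z i j t j = z j - t := by
  simp [transfer, hij.symm]

lemma transfer_apply_of_ne {k : ι} (hki : k ≠ i) (hkj : k ≠ j) : transfer z i j t k = z k := by
  simp [transfer, hki, hkj]

end Apply

lemma sum_transfer [Fintype ι] [DecidableEq ι] (z : ι → G) (i j : ι) (t : G) :
    ∑ k, transfer z i j t k = ∑ k, z k := by
  simp [transfer, Finset.sum_add_distrib]

end Transfer

section Cost

variable {ι R : Type*} [Ring R] [Fintype ι] [DecidableEq ι]

lemma sum_mul_transfer (w z : ι → R) (i j : ι) (t : R) :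
    ∑ k, w k * transfer z i j t k = ∑ k, w k * z k + (w i - w j) * t := by
  simp [transfer, mul_add, mul_sub, sub_mul, Finset.sum_add_distrib, Pi.single_apply, add_sub_assoc]

lemma sum_mul_transfer_le [PartialOrder R] [IsOrderedRing R] {w : ι → R} (z : ι → R) {i j : ι}
    {t : R} (hw : w i ≤ w j) (ht : 0 ≤ t) :
    ∑ k, w k * transfer z i j t k ≤ ∑ k, w k * z k := by
  rw [sum_mul_transfer]
  exact add_le_of_nonpos_right (mul_nonpos_of_nonpos_of_nonneg (sub_nonpos.2 hw) ht)

end Cost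

/-- The coordinates of `z` lying strictly between the bounds `a` and `b`; for `a = 0` and `b = 1`
these are the fractional coordinates of a vector in the unit cube. -/
def fractionalCoords {ι α : Type*} [Preorder α] (a b z : ι → α) : Set ι :=
  {i | z i ∈ Ioo (a i) (b i)}

section Box

variable {ι G : Type*} [AddCommGroup G] [DecidableEq ι] {a b z : ι → G} {i j : ι} {t : G}

lemma transfer_mem_Icc [PartialOrder G] [IsOrderedAddMonoid G] (hz : z ∈ Icc a b) (hij : i ≠ j)
    (ht : 0 ≤ t) (hti : t ≤ b i - z i) (htj : t ≤ z j - a j) :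
    transfer z i j t ∈ Icc a b := by
  suffices ∀ k, a k ≤ transfer z i j t k ∧ transfer z i j t k ≤ b k from
    ⟨fun k => (this k).1, fun k => (this k).2⟩
  intro k
  have hak : a k ≤ z k := hz.1 k
  have hkb : z k ≤ b k := hz.2 k
  rcases eq_or_ne k i with rfl | hki
  · rw [transfer_apply_target z t hij]
    exact ⟨le_add_of_le_of_nonneg hak ht, le_sub_iff_add_le'.1 hti⟩
  rcases eq_or_ne k j with rfl | hkj
  · rw [transfer_apply_source z t hij]
    exact ⟨le_sub_comm.1 htj, (sub_le_self _ ht).trans hkb⟩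
  · rw [transfer_apply_of_ne z t hki hkj]
    exact ⟨hak, hkb⟩

lemma fractionalCoords_transfer_subset [Preorder G] (hi : i ∈ fractionalCoords a b z)
    (hj : j ∈ fractionalCoords a b z) :
    fractionalCoords a b (transfer z i j t) ⊆ fractionalCoords a b z := by
  intro k hk
  rcases eq_or_ne k i with rfl | hki
  · exact hi
  rcases eq_or_ne k j with rfl | hkj
  · exact hj
  · simpa only [fractionalCoords, mem_ofPred_eq, transfer_apply_of_ne z t hki hkj] using hk

lemma fractionalCoords_transfer_min_ssubset [LinearOrder G] (hij : i ≠ j)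
    (hi : i ∈ fractionalCoords a b z) (hj : j ∈ fractionalCoords a b z) :
    fractionalCoords a b (transfer z i j (min (b i - z i) (z j - a j))) ⊂
      fractionalCoords a b z := by
  rw [ssubset_iff_of_subset (fractionalCoords_transfer_subset hi hj)]
  rcases min_choice (b i - z i) (z j - a j) with hmin | hmin <;> rw [hmin]
  · refine ⟨i, hi, fun hi' => hi'.2.ne ?_⟩
    rw [transfer_apply_target z _ hij, add_sub_cancel]
  · refine ⟨j, hj, fun hj' => hj'.1.ne' ?_⟩
    rw [transfer_apply_source z _ hij, sub_sub_cancel]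

end Box

section Rounding

variable {ι R : Type*} [Ring R] [LinearOrder R] [IsOrderedRing R] [Fintype ι] {a b z : ι → R}

lemma exists_fractionalCoords_ssubset (w : ι → R) (hz : z ∈ Icc a b)
    (hfrac : (fractionalCoords a b z).Nontrivial) :
    ∃ y ∈ Icc a b, ∑ i, y i = ∑ i, z i ∧ ∑ i, w i * y i ≤ ∑ i, w i * z i ∧
      fractionalCoords a b y ⊂ fractionalCoords a b z := by
  classical
  obtain ⟨i, hi, j, hj, hij, hw⟩ : ∃ i ∈ fractionalCoords a b z, ∃ j ∈ fractionalCoords a b z,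
      i ≠ j ∧ w i ≤ w j := by
    obtain ⟨i, hi, j, hj, hij⟩ := hfrac
    rcases le_total (w i) (w j) with hw | hw
    · exact ⟨i, hi, j, hj, hij, hw⟩
    · exact ⟨j, hj, i, hi, hij.symm, hw⟩
  have ht : 0 ≤ min (b i - z i) (z j - a j) :=
    le_min (sub_nonneg.2 hi.2.le) (sub_nonneg.2 hj.1.le)
  exact ⟨transfer z i j (min (b i - z i) (z j - a j)),
    transfer_mem_Icc hz hij ht (min_le_left _ _) (min_le_right _ _),
    sum_transfer z i j _, sum_mul_transfer_le z hw ht,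
    fractionalCoords_transfer_min_ssubset hij hi hj⟩

theorem almost_integral_rounding_general (w : ι → R) (hz : z ∈ Icc a b) :
    ∃ z' ∈ Icc a b, ∑ i, z' i = ∑ i, z i ∧ ∑ i, w i * z' i ≤ ∑ i, w i * z i ∧
      (fractionalCoords a b z').Subsingleton := by
  obtain ⟨z', ⟨hz', hsum, hcost⟩, hmin⟩ := exists_minimalFor_of_wellFoundedLT
    (fun y => y ∈ Icc a b ∧ ∑ i, y i = ∑ i, z i ∧ ∑ i, w i * y i ≤ ∑ i, w i * z i)
    (fractionalCoords a b) ⟨z, hz, rfl, le_rfl⟩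
  refine ⟨z', hz', hsum, hcost, not_nontrivial_iff.1 fun hfrac => ?_⟩
  obtain ⟨y, hy, hysum, hycost, hssubset⟩ := exists_fractionalCoords_ssubset w hz' hfrac
  exact hssubset.not_subset (hmin ⟨hy, hysum.trans hsum, hycost.trans hcost⟩ hssubset.subset)

end Rounding

/-- Any fractional vector `z ∈ [0,1]^ι` can be replaced by an almost-integral
vector `z'` (at most one fractional coordinate) with the same total mass and no larger
weighted cost. -/
theorem almost_integral_rounding
    (ι : Type) [Fintype ι]
    (w : ι → ℝ) (hw : ∀ i, 0 ≤ w i)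
    (z : ι → ℝ) (hz0 : ∀ i, 0 ≤ z i) (hz1 : ∀ i, z i ≤ 1) :
    ∃ z' : ι → ℝ,
      (∀ i, 0 ≤ z' i) ∧ (∀ i, z' i ≤ 1) ∧
      (∑ i, z' i) = (∑ i, z i) ∧
      (∑ i, w i * z' i) ≤ (∑ i, w i * z i) ∧
      (∀ i j : ι, (0 < z' i ∧ z' i < 1) → (0 < z' j ∧ z' j < 1) → i = j) := by
  obtain ⟨z', ⟨h0, h1⟩, hsum, hcost, hfrac⟩ :=
    almost_integral_rounding_general (a := 0) (b := 1) w ⟨hz0, hz1⟩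
  exact ⟨z', h0, h1, hsum, hcost, fun _ _ hi hj => hfrac hi hj⟩
end

section
/- Let ι be a finite set, w : ι → ℝ with w i ≥ 0 for all i, and z : ι → ℝ with 0 ≤ z i ≤ 1 for all i. Let ℓ ≥ 2 be real and let L, U, d be reals with 0 ≤ L ≤ U, U > 0, d > U, U·Σ_{i∈ι} z i = d, and L·Σ_{i∈ι} z i ≤ d. Then there exists ẑ : ι → ℝ with ẑ i ∈ {0,1} for every i, such that d ≤ (2 − 1/ℓ)·U·Σ_{i∈ι} ẑ i, (1 − 1/ℓ)·L·Σ_{i∈ι} ẑ i ≤ d, Σ_{i∈ι} ẑ i ≤ (ℓ/(ℓ−1))·Σ_{i∈ι} z i, and Σ_{i∈ι} w i · ẑ i ≤ (ℓ/(ℓ−1))·Σ_{i∈ι} w i · z i. -/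
/-!
Let `S = ∑ z` and `q = 1 / ℓ`, and open the `k = ⌊S + q⌋` cheapest facilities. Then
`k - q ≤ S < k + (1 - q)` and `k ≥ 1`, whence `(1 - q) k ≤ S ≤ (2 - q) k`. For the cost, let `c` be
the largest weight opened. Moving fractional mass onto the cheapest facilities costs at most `c` per
unit of mass added, so the cost grows by at most `c (k - S) ≤ c q`, which is at most `q` times the
new cost because `c` is one of its summands.
-/

open Finset

section Selection

variable {ι R : Type*}

theorem exists_subset_card_eq_forall_le [LinearOrder R] (w : ι → R) {s : Finset ι} {k : ℕ}
    (hk : k ≤ #s) : ∃ t ⊆ s, #t = k ∧ ∀ i ∈ t, ∀ j ∈ s, j ∉ t → w i ≤ w j := by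
  classical
  induction k with
  | zero => exact ⟨∅, by simp⟩
  | succ k ih =>
    obtain ⟨t, hts, htk, ht⟩ := ih (by lia)
    have hne : (s \ t).Nonempty := by
      rw [← card_pos, card_sdiff_of_subset hts]
      lia
    obtain ⟨a, ha, ha_min⟩ := exists_min_image (s \ t) w hne
    obtain ⟨has, hat⟩ := mem_sdiff.1 ha
    refine ⟨insert a t, insert_subset has hts, by rw [card_insert_of_notMem hat, htk], ?_⟩
    intro i hi j hjs hj
    obtain ⟨-, hjt⟩ := not_or.1 (mem_insert.not.1 hj)
    obtain rfl | hit := mem_insert.1 hi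
    · exact ha_min j (mem_sdiff.2 ⟨hjs, hjt⟩)
    · exact ht i hit j hjs hjt

section PartialOrder

variable [CommRing R] [PartialOrder R] [IsOrderedRing R] {s t : Finset ι} {w z : ι → R}

theorem sum_le_sum_mul_of_nonpos_of_nonneg (hts : t ⊆ s) (hw_in : ∀ i ∈ t, w i ≤ 0)
    (hw_out : ∀ i ∈ s, i ∉ t → 0 ≤ w i) (hz0 : ∀ i ∈ s, 0 ≤ z i) (hz1 : ∀ i ∈ s, z i ≤ 1) :
    ∑ i ∈ t, w i ≤ ∑ i ∈ s, w i * z i :=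
  calc ∑ i ∈ t, w i ≤ ∑ i ∈ t, w i * z i :=
        sum_le_sum fun i hi => le_mul_of_le_one_right (hw_in i hi) (hz1 i (hts hi))
    _ ≤ ∑ i ∈ s, w i * z i :=
        sum_le_sum_of_subset_of_nonneg hts fun i his hit =>
          mul_nonneg (hw_out i his hit) (hz0 i his)

theorem sum_le_sum_mul_add_mul_card_sub_sum {c : R} (hts : t ⊆ s) (hw_in : ∀ i ∈ t, w i ≤ c)
    (hw_out : ∀ i ∈ s, i ∉ t → c ≤ w i) (hz0 : ∀ i ∈ s, 0 ≤ z i) (hz1 : ∀ i ∈ s, z i ≤ 1) :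
    ∑ i ∈ t, w i ≤ ∑ i ∈ s, w i * z i + c * (#t - ∑ i ∈ s, z i) := by
  have h_shifted : ∑ i ∈ t, (w i - c) ≤ ∑ i ∈ s, (w i - c) * z i :=
    sum_le_sum_mul_of_nonpos_of_nonneg hts (fun i hi => sub_nonpos.2 (hw_in i hi))
      (fun i his hit => sub_nonneg.2 (hw_out i his hit)) hz0 hz1
  simp only [sub_mul, sum_sub_distrib, sum_const, nsmul_eq_mul, ← mul_sum] at h_shifted
  linear_combination h_shifted

end PartialOrder

variable [CommRing R] [LinearOrder R] [IsStrictOrderedRing R] {s : Finset ι} {w z : ι → R}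

theorem exists_subset_card_eq_one_sub_mul_sum_le (hw : ∀ i ∈ s, 0 ≤ w i)
    (hz0 : ∀ i ∈ s, 0 ≤ z i) (hz1 : ∀ i ∈ s, z i ≤ 1) {q : R} (hq : 0 ≤ q) {k : ℕ}
    (hks : k ≤ #s) (hkz : k ≤ ∑ i ∈ s, z i + q) :
    ∃ t ⊆ s, #t = k ∧ (1 - q) * ∑ i ∈ t, w i ≤ ∑ i ∈ s, w i * z i := by
  obtain ⟨t, hts, rfl, ht_cheap⟩ := exists_subset_card_eq_forall_le w hks
  refine ⟨t, hts, rfl, ?_⟩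
  obtain rfl | ht := t.eq_empty_or_nonempty
  · simpa using sum_nonneg fun i hi => mul_nonneg (hw i hi) (hz0 i hi)
  obtain ⟨m, hmt, hm_max⟩ := exists_max_image t w ht
  have hm_le_sum : w m ≤ ∑ i ∈ t, w i := single_le_sum (fun i hi => hw i (hts hi)) hmt
  have h_cost : ∑ i ∈ t, w i ≤ ∑ i ∈ s, w i * z i + q * ∑ i ∈ t, w i :=
    calc ∑ i ∈ t, w i ≤ ∑ i ∈ s, w i * z i + w m * (#t - ∑ i ∈ s, z i) :=
          sum_le_sum_mul_add_mul_card_sub_sum hts hm_max (ht_cheap m hmt) hz0 hz1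
      _ ≤ ∑ i ∈ s, w i * z i + w m * q := by
          have hwm : 0 ≤ w m := hw m (hts hmt)
          gcongr
          exact sub_le_iff_le_add'.2 hkz
      _ ≤ ∑ i ∈ s, w i * z i + q * ∑ i ∈ t, w i := by
          rw [mul_comm]
          gcongr
  linarith

theorem exists_subset_card_near_sum_and_one_sub_mul_sum_le [FloorSemiring R]
    (hw : ∀ i ∈ s, 0 ≤ w i) (hz0 : ∀ i ∈ s, 0 ≤ z i) (hz1 : ∀ i ∈ s, z i ≤ 1)
    (hz : 1 ≤ ∑ i ∈ s, z i) {q : R} (hq0 : 0 ≤ q) (hq1 : q < 1) :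
    ∃ t ⊆ s, ∑ i ∈ s, z i ≤ (2 - q) * #t ∧ (1 - q) * #t ≤ ∑ i ∈ s, z i ∧
      (1 - q) * ∑ i ∈ t, w i ≤ ∑ i ∈ s, w i * z i := by
  set S := ∑ i ∈ s, z i
  have hS_card : S ≤ #s := by simpa using sum_le_card_nsmul s z 1 hz1
  have h_floor_le : (⌊S + q⌋₊ : R) ≤ S + q := Nat.floor_le (by linarith)
  have h_lt_floor : S + q < ⌊S + q⌋₊ + 1 := Nat.lt_floor_add_one _
  have h_floor_card : ⌊S + q⌋₊ ≤ #s := by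
    rw [← Nat.lt_add_one_iff, Nat.floor_lt (by linarith)]
    push_cast
    linarith
  obtain ⟨t, hts, ht_card, ht_cost⟩ :=
    exists_subset_card_eq_one_sub_mul_sum_le hw hz0 hz1 hq0 h_floor_card h_floor_le
  rw [← ht_card] at h_floor_le h_lt_floor
  have ht_pos : (1 : R) ≤ #t := by
    rw [ht_card, Nat.one_le_cast, Nat.one_le_floor_iff]
    linarith
  refine ⟨t, hts, ?_, ?_, ht_cost⟩
  · linarith [le_mul_of_one_le_right (sub_nonneg.2 hq1.le) ht_pos]
  · linarith [le_mul_of_one_le_right hq0 ht_pos]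

end Selection

section Rounding

variable {K : Type*} [Field K] [LinearOrder K] [IsStrictOrderedRing K]

theorem le_div_sub_one_mul_iff {ℓ x y : K} (hℓ : 1 < ℓ) :
    x ≤ ℓ / (ℓ - 1) * y ↔ (1 - 1 / ℓ) * x ≤ y := by
  have hℓ0 : 0 < ℓ := one_pos.trans hℓ
  have h_inv : ℓ / (ℓ - 1) = (1 - 1 / ℓ)⁻¹ := by rw [one_sub_div hℓ0.ne', inv_div]
  have h_pos : 0 < 1 - 1 / ℓ := sub_pos.2 ((div_lt_one hℓ0).2 hℓ)
  rw [h_inv, le_inv_mul_iff₀ h_pos]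

theorem dense_cluster_rounding_general [FloorSemiring K] {ι : Type*} [Fintype ι] {w z : ι → K}
    (hw : ∀ i, 0 ≤ w i) (hz0 : ∀ i, 0 ≤ z i) (hz1 : ∀ i, z i ≤ 1) {ℓ L U d : K} (hℓ : 1 < ℓ)
    (hU : 0 < U) (hdU : U ≤ d) (hzd : U * ∑ i, z i = d) (hzL : L * ∑ i, z i ≤ d) :
    ∃ zhat : ι → K,
      (∀ i, zhat i = 0 ∨ zhat i = 1) ∧
      d ≤ (2 - 1 / ℓ) * U * ∑ i, zhat i ∧
      (1 - 1 / ℓ) * L * ∑ i, zhat i ≤ d ∧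
      ∑ i, zhat i ≤ ℓ / (ℓ - 1) * ∑ i, z i ∧
      ∑ i, w i * zhat i ≤ ℓ / (ℓ - 1) * ∑ i, w i * z i := by
  classical
  have hℓ0 : 0 < ℓ := one_pos.trans hℓ
  have hz : 1 ≤ ∑ i, z i := (le_mul_iff_one_le_right hU).1 (hzd ▸ hdU)
  have hLU : L ≤ U := le_of_mul_le_mul_right (hzL.trans_eq hzd.symm) (one_pos.trans_le hz)
  obtain ⟨t, -, h_upper, h_lower, h_cost⟩ :=
    exists_subset_card_near_sum_and_one_sub_mul_sum_le (fun i _ => hw i) (fun i _ => hz0 i)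
      (fun i _ => hz1 i) hz (one_div_pos.2 hℓ0).le ((div_lt_one hℓ0).2 hℓ)
  have h_card_nonneg : 0 ≤ (1 - 1 / ℓ) * (#t : K) :=
    mul_nonneg (sub_nonneg.2 ((div_le_one hℓ0).2 hℓ.le)) (Nat.cast_nonneg _)
  have h_sum : ∑ i, (if i ∈ t then (1 : K) else 0) = #t := by simp
  have h_weight : ∑ i, w i * (if i ∈ t then (1 : K) else 0) = ∑ i ∈ t, w i := by simp
  refine ⟨fun i => if i ∈ t then 1 else 0, fun i => (ite_eq_or_eq _ _ _).symm, ?_⟩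
  rw [h_sum, h_weight, le_div_sub_one_mul_iff hℓ, le_div_sub_one_mul_iff hℓ, ← hzd,
    mul_right_comm, mul_right_comm _ L, mul_comm U]
  exact ⟨mul_le_mul_of_nonneg_right h_upper hU.le,
    (mul_le_mul_of_nonneg_left hLU h_card_nonneg).trans
      (mul_le_mul_of_nonneg_right h_lower hU.le), h_lower, h_cost⟩

end Rounding

/-- Rounding lemma for a dense cluster: a feasible fractional solution `z`
of the cluster LP with total demand `d > U` can be rounded to an integral vector `ẑ`
violating the upper-bound constraint by factor `(2 - 1/ℓ)`, the lower-bound constraint by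
factor `(1 - 1/ℓ)`, and losing at most a factor `ℓ/(ℓ-1)` in cost. -/
theorem dense_cluster_rounding
    (ι : Type) [Fintype ι]
    (w : ι → ℝ) (hw : ∀ i, 0 ≤ w i)
    (z : ι → ℝ) (hz0 : ∀ i, 0 ≤ z i) (hz1 : ∀ i, z i ≤ 1)
    (ℓ : ℝ) (hℓ : 2 ≤ ℓ)
    (L U d : ℝ) (hL : 0 ≤ L) (hLU : L ≤ U) (hU : 0 < U) (hdU : U < d)
    (hzd : U * (∑ i, z i) = d)
    (hzL : L * (∑ i, z i) ≤ d) :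
    ∃ zhat : ι → ℝ,
      (∀ i, zhat i = 0 ∨ zhat i = 1) ∧
      d ≤ (2 - 1 / ℓ) * U * (∑ i, zhat i) ∧
      (1 - 1 / ℓ) * L * (∑ i, zhat i) ≤ d ∧
      (∑ i, zhat i) ≤ (ℓ / (ℓ - 1)) * (∑ i, z i) ∧
      (∑ i, w i * zhat i) ≤ (ℓ / (ℓ - 1)) * (∑ i, w i * z i) :=
  dense_cluster_rounding_general hw hz0 hz1 (by linarith) hU hdU.le hzd hzL
end

section
/- Let F and C be finite sets, d : F × C → ℝ with d(i,j) ≥ 0 for all i, j, and x : F × C → ℝ with x(i,j) ≥ 0 and Σ_{i∈F} x(i,j) = 1 for every j ∈ C. Then there exists σ : C → F such that for every i ∈ F, ⌊Σ_{j∈C} x(i,j)⌋ ≤ |σ⁻¹(i)| ≤ ⌈Σ_{j∈C} x(i,j)⌉, and Σ_{j∈C} d(σ(j), j) ≤ Σ_{i∈F} Σ_{j∈C} d(i,j)·x(i,j). -/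
/-!
Cut facility `i`, of load `L i`, into `⌈L i⌉` unit slots and fill them greedily: the first `⌊L i⌋`
are filled completely and at most one is filled partially. Spreading each `x i j` over the slots of
`i` in proportion to their filling gives a client-by-slot matrix with row sums `1` and column sums
at most `1`. Dummy clients that absorb the unfilled capacity make it doubly stochastic, so by
Birkhoff's theorem it is a convex combination of perfect matchings, one of which costs no more than
the average. A matching in the support never gives a full slot to a dummy client, so facility `i`
receives at least `⌊L i⌋` clients, and at most `⌈L i⌉` because it has no more slots.
-/

open Finset

section Averaging

variable {R ι : Type*} [Ring R] [LinearOrder R] [IsStrictOrderedRing R] [Fintype ι]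

lemma exists_pos_weight_and_le_sum_mul {w : ι → R} (hw_nonneg : ∀ i, 0 ≤ w i)
    (hw_sum : ∑ i, w i = 1) (f : ι → R) : ∃ i, 0 < w i ∧ f i ≤ ∑ k, w k * f k := by
  set avg := ∑ k, w k * f k
  have sum_deviation : ∑ i, w i * (f i - avg) = 0 := by
    simp only [mul_sub, sum_sub_distrib, ← sum_mul, hw_sum, one_mul, avg, sub_self]
  by_contra! f_gt_avg
  have deviation_nonneg (i : ι) : 0 ≤ w i * (f i - avg) := by
    rcases (hw_nonneg i).eq_or_lt with hw | hw
    · simp [← hw]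
    · exact mul_nonneg hw.le (sub_nonneg.2 (f_gt_avg i hw).le)
  have weight_eq_zero (i : ι) : w i = 0 := by
    by_contra hw
    have hw_pos := (hw_nonneg i).lt_of_ne' hw
    have deviation_eq_zero :=
      (sum_eq_zero_iff_of_nonneg fun i _ ↦ deviation_nonneg i).1 sum_deviation i (mem_univ i)
    exact (mul_pos hw_pos (sub_pos.2 (f_gt_avg i hw_pos))).ne' deviation_eq_zero
  simp [weight_eq_zero] at hw_sum

end Averaging

section PadRows

variable {R A B : Type*} [Field R] [Fintype A]

/-- The matrix `y` extended by `D` equal dummy rows which together absorb the slack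
`1 - ∑ a, y a b` of every column. -/
def padRows (y : A → B → R) (D : ℕ) : A ⊕ Fin D → B → R :=
  Sum.elim y fun _ b ↦ (1 - ∑ a, y a b) / D

lemma sum_padRows_row [CharZero R] [Fintype B] {y : A → B → R}
    (hrow : ∀ a, ∑ b, y a b = 1) {D : ℕ} (hD : ∑ b, (1 - ∑ a, y a b) = D)
    (r : A ⊕ Fin D) : ∑ b, padRows y D r b = 1 := by
  rcases r with a | t
  · exact hrow a
  · have D_ne_zero : (D : R) ≠ 0 := Nat.cast_ne_zero.2 t.pos.ne'
    simp only [padRows, Sum.elim_inr, ← sum_div, hD, div_self D_ne_zero]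

variable [LinearOrder R] [IsStrictOrderedRing R]

lemma padRows_nonneg {y : A → B → R} (hy : ∀ a b, 0 ≤ y a b) (hcol : ∀ b, ∑ a, y a b ≤ 1)
    (D : ℕ) (r : A ⊕ Fin D) (b : B) : 0 ≤ padRows y D r b := by
  rcases r with a | _
  · exact hy a b
  · exact div_nonneg (sub_nonneg.2 (hcol b)) D.cast_nonneg

lemma sum_padRows_col [Fintype B] {y : A → B → R} (hcol : ∀ b, ∑ a, y a b ≤ 1)
    {D : ℕ} (hD : ∑ b, (1 - ∑ a, y a b) = D) (b : B) : ∑ r, padRows y D r b = 1 := by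
  have slack_eq_zero (hD_zero : (D : R) = 0) : 1 - ∑ a, y a b = 0 :=
    (sum_eq_zero_iff_of_nonneg fun b _ ↦ sub_nonneg.2 (hcol b)).1 (hD.trans hD_zero) b (mem_univ b)
  calc ∑ r, padRows y D r b = ∑ a, y a b + (1 - ∑ a, y a b) / D * D := by
        simp [padRows, mul_comm]
    _ = 1 := by rw [div_mul_cancel_of_imp slack_eq_zero, add_sub_cancel]

end PadRows

section Birkhoff

variable {R : Type*} [Field R] [LinearOrder R] [IsStrictOrderedRing R]

theorem exists_perm_sum_le_of_mem_doublyStochastic {n : Type*} [Fintype n] [DecidableEq n]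
    {M : Matrix n n R} (hM : M ∈ doublyStochastic R n) (c : n → n → R) :
    ∃ σ : Equiv.Perm n, (∀ a, 0 < M a (σ a)) ∧
      ∑ a, c a (σ a) ≤ ∑ a, ∑ b, c a b * M a b := by
  obtain ⟨w, hw_nonneg, hw_sum, rfl⟩ := exists_eq_sum_perm_of_mem_doublyStochastic hM
  have entry (a b : n) :
      (∑ σ, w σ • σ.permMatrix R) a b = ∑ σ : Equiv.Perm n, if σ a = b then w σ else 0 := by
    simp [Matrix.sum_apply, PEquiv.toMatrix_apply, Equiv.toPEquiv_apply, eq_comm]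
  have cost_eq : ∑ a, ∑ b, c a b * (∑ σ, w σ • σ.permMatrix R) a b
      = ∑ σ : Equiv.Perm n, w σ * ∑ a, c a (σ a) := by
    calc _ = ∑ a, ∑ σ : Equiv.Perm n, ∑ b, c a b * (if σ a = b then w σ else 0) := by
          simp only [entry, mul_sum]
          exact sum_congr rfl fun a _ ↦ sum_comm
      _ = ∑ σ : Equiv.Perm n, ∑ a, w σ * c a (σ a) := by
          rw [sum_comm]
          simp [mul_comm]
      _ = _ := by simp only [mul_sum]
  obtain ⟨σ, hσ_pos, hσ_cost⟩ := exists_pos_weight_and_le_sum_mul hw_nonneg hw_sum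
    fun σ ↦ ∑ a, c a (σ a)
  refine ⟨σ, fun a ↦ ?_, hσ_cost.trans_eq cost_eq.symm⟩
  rw [entry]
  refine sum_pos' (fun τ _ ↦ ?_) ⟨σ, mem_univ σ, by simpa using hσ_pos⟩
  split_ifs
  exacts [hw_nonneg τ, le_rfl]

variable {A B : Type*} [Fintype A] [Fintype B]

theorem exists_equiv_sum_le_of_sum_eq_one {y : A → B → R} (hy : ∀ a b, 0 ≤ y a b)
    (hrow : ∀ a, ∑ b, y a b = 1) (hcol : ∀ b, ∑ a, y a b = 1) (c : A → B → R) :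
    ∃ e : A ≃ B, (∀ a, 0 < y a (e a)) ∧ ∑ a, c a (e a) ≤ ∑ a, ∑ b, c a b * y a b := by
  classical
  have card_eq : (Fintype.card A : R) = Fintype.card B := by
    simpa [hrow, hcol] using sum_comm (s := univ) (t := univ) (f := y)
  let e₀ : A ≃ B := Fintype.equivOfCardEq (Nat.cast_injective card_eq)
  have hM : Matrix.of (fun a a' ↦ y a (e₀ a')) ∈ doublyStochastic R A :=
    mem_doublyStochastic_iff_sum.2
      ⟨fun _ _ ↦ hy _ _, fun a ↦ (e₀.sum_comp (y a)).trans (hrow a), fun _ ↦ hcol _⟩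
  obtain ⟨σ, hσ_pos, hσ_cost⟩ :=
    exists_perm_sum_le_of_mem_doublyStochastic hM fun a a' ↦ c a (e₀ a')
  exact ⟨σ.trans e₀, hσ_pos, hσ_cost.trans_eq <|
    sum_congr rfl fun a _ ↦ e₀.sum_comp fun b ↦ c a b * y a b⟩

lemma exists_sum_slack_eq_natCast {y : A → B → R} (hrow : ∀ a, ∑ b, y a b = 1)
    (hcol : ∀ b, ∑ a, y a b ≤ 1) :
    ∃ D : ℕ, ∑ b, (1 - ∑ a, y a b) = (D : R) := by
  have sum_slack : ∑ b, (1 - ∑ a, y a b) = (Fintype.card B : R) - Fintype.card A := by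
    rw [sum_sub_distrib, sum_comm]
    simp [hrow]
  have card_le : Fintype.card A ≤ Fintype.card B := by
    have slack_nonneg : 0 ≤ ∑ b, (1 - ∑ a, y a b) := sum_nonneg fun b _ ↦ sub_nonneg.2 (hcol b)
    rw [sum_slack] at slack_nonneg
    exact_mod_cast sub_nonneg.1 slack_nonneg
  exact ⟨Fintype.card B - Fintype.card A, by rw [sum_slack, Nat.cast_sub card_le]⟩

theorem exists_embedding_sum_le_of_sum_le_one {y : A → B → R} (hy : ∀ a b, 0 ≤ y a b)
    (hrow : ∀ a, ∑ b, y a b = 1) (hcol : ∀ b, ∑ a, y a b ≤ 1) (c : A → B → R) :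
    ∃ f : A ↪ B, (∀ b, ∑ a, y a b = 1 → b ∈ Set.range f) ∧
      ∑ a, c a (f a) ≤ ∑ a, ∑ b, c a b * y a b := by
  obtain ⟨D, hD⟩ := exists_sum_slack_eq_natCast hrow hcol
  obtain ⟨e, he_pos, he_cost⟩ := exists_equiv_sum_le_of_sum_eq_one (padRows_nonneg hy hcol D)
    (sum_padRows_row hrow hD) (sum_padRows_col hcol hD) (Sum.elim c fun _ _ ↦ 0)
  refine ⟨Function.Embedding.inl.trans e.toEmbedding, fun b hb ↦ ?_, ?_⟩
  · obtain ⟨a | t, rfl⟩ := e.surjective b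
    · exact ⟨a, rfl⟩
    · have dummy_pos := he_pos (Sum.inr t)
      simp [padRows, hb] at dummy_pos
  · simpa [padRows] using he_cost

end Birkhoff

section Fibers

variable {A ι : Type*} [Fintype A] [DecidableEq ι] {β : ι → Type*}

lemma card_filter_fst_eq_le [∀ i, Fintype (β i)] (f : A ↪ Σ i, β i) (i : ι) :
    #{a | (f a).1 = i} ≤ Fintype.card (β i) := by
  have fiber_subset :
      ({a | (f a).1 = i} : Finset A).map f ⊆ univ.map (Function.Embedding.sigmaMk i) := by
    intro s hs
    obtain ⟨a, ha, rfl⟩ := mem_map.1 hs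
    obtain rfl := (mem_filter.1 ha).2
    exact mem_map.2 ⟨(f a).2, mem_univ _, rfl⟩
  simpa using card_le_card fiber_subset

lemma card_le_card_filter_fst_eq {κ : Type*} [Fintype κ] (f : A → Σ i, β i) {i : ι}
    (g : κ ↪ β i) (hg : ∀ k, ⟨i, g k⟩ ∈ Set.range f) :
    Fintype.card κ ≤ #{a | (f a).1 = i} := by
  choose h hh using hg
  refine card_le_card_of_injOn h (fun k _ ↦ by simp [hh]) fun k _ k' _ hkk' ↦ ?_
  have sigma_eq : (⟨i, g k⟩ : Σ i, β i) = ⟨i, g k'⟩ := by rw [← hh, ← hh, hkk']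
  exact g.injective (sigma_mk_injective sigma_eq)

end Fibers

section SlotFill

variable {R : Type*} [Ring R] [LinearOrder R]

/-- The amount in the `k`-th of a row of unit slots (counted from `0`) when a load `L` is poured
into them greedily, i.e. the length of `[0, L] ∩ [k, k + 1]`. -/
def slotFill (L : R) (k : ℕ) : R := min L (k + 1 : ℕ) - min L k

lemma sum_slotFill [FloorSemiring R] {L : R} (hL : 0 ≤ L) :
    ∑ k : Fin ⌈L⌉₊, slotFill L k = L := by
  rw [Fin.sum_univ_eq_sum_range (slotFill L)]
  simp only [slotFill]
  rw [sum_range_sub (fun k : ℕ ↦ min L k), min_eq_left (Nat.le_ceil L), Nat.cast_zero,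
    min_eq_right hL, sub_zero]

variable [IsStrictOrderedRing R]

lemma slotFill_nonneg (L : R) (k : ℕ) : 0 ≤ slotFill L k :=
  sub_nonneg.2 <| min_le_min_left L <| Nat.cast_le.2 k.le_succ

lemma slotFill_le_one (L : R) (k : ℕ) : slotFill L k ≤ 1 := by
  rw [slotFill, sub_le_iff_le_add', ← min_add_add_right, Nat.cast_succ]
  exact min_le_min_right _ (le_add_of_nonneg_right zero_le_one)

lemma slotFill_eq_one {L : R} {k : ℕ} (hk : (k + 1 : ℕ) ≤ L) : slotFill L k = 1 := by
  have hk' : (k : R) ≤ L := (Nat.cast_le.2 k.le_succ).trans hk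
  rw [slotFill, min_eq_right hk, min_eq_right hk', Nat.cast_succ, add_sub_cancel_left]

end SlotFill

section Load

variable {R F C : Type*} [AddCommMonoid R] [Fintype C]

/-- The total load `∑ j, x i j` which the fractional assignment `x` puts on facility `i`. -/
def load (x : F → C → R) (i : F) : R := ∑ j, x i j

lemma load_nonneg [PartialOrder R] [IsOrderedAddMonoid R] {x : F → C → R} (hx : ∀ i j, 0 ≤ x i j)
    (i : F) : 0 ≤ load x i :=
  sum_nonneg fun j _ ↦ hx i j

end Load

section SlotShare

variable {R F C : Type*} [Field R] [LinearOrder R] [FloorSemiring R] [Fintype C]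

/-- The unit slots offered by the facilities, `⌈load x i⌉` of them at facility `i`. -/
abbrev Slot (x : F → C → R) : Type _ := Σ i, Fin ⌈load x i⌉₊

/-- The fraction of client `j` served by slot `s` when each `x i j` is spread over the slots of `i`
in proportion to their filling. The value of `x i j / load x i` at `load x i = 0` is irrelevant,
since such an `i` has no slots. -/
def slotShare (x : F → C → R) (j : C) (s : Slot x) : R :=
  x s.1 j / load x s.1 * slotFill (load x s.1) s.2

lemma sum_slotShare_col (x : F → C → R) (s : Slot x) :
    ∑ j, slotShare x j s = slotFill (load x s.1) s.2 := by
  have load_ne_zero : load x s.1 ≠ 0 := (Nat.ceil_pos.1 s.2.pos).ne'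
  simp only [slotShare, ← sum_mul, ← sum_div]
  rw [← load, div_self load_ne_zero, one_mul]

variable [IsStrictOrderedRing R]

lemma slotShare_nonneg {x : F → C → R} (hx : ∀ i j, 0 ≤ x i j) (j : C) (s : Slot x) :
    0 ≤ slotShare x j s :=
  mul_nonneg (div_nonneg (hx _ _) (load_nonneg hx _)) (slotFill_nonneg _ _)

lemma sum_mul_slotShare_row [Fintype F] {x : F → C → R} (hx : ∀ i j, 0 ≤ x i j) (g : F → R)
    (j : C) : ∑ s : Slot x, g s.1 * slotShare x j s = ∑ i, g i * x i j := by
  have eq_zero_of_load (i : F) (hi : load x i = 0) : x i j = 0 :=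
    (sum_eq_zero_iff_of_nonneg fun j _ ↦ hx i j).1 hi j (mem_univ j)
  rw [Fintype.sum_sigma]
  refine sum_congr rfl fun i _ ↦ ?_
  simp only [slotShare, ← mul_sum]
  rw [sum_slotFill (load_nonneg hx i), div_mul_cancel_of_imp (eq_zero_of_load i)]

theorem exists_embedding_slot_sum_le [Fintype F] {x : F → C → R} (hx : ∀ i j, 0 ≤ x i j)
    (hx_sum : ∀ j, ∑ i, x i j = 1) (d : F → C → R) :
    ∃ f : C ↪ Slot x, (∀ i (k : Fin ⌈load x i⌉₊), (k + 1 : ℕ) ≤ load x i → ⟨i, k⟩ ∈ Set.range f) ∧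
      ∑ j, d (f j).1 j ≤ ∑ i, ∑ j, d i j * x i j := by
  obtain ⟨f, hf_full, hf_cost⟩ := exists_embedding_sum_le_of_sum_le_one (slotShare_nonneg hx)
    (fun j ↦ by simpa [hx_sum] using sum_mul_slotShare_row hx (fun _ ↦ 1) j)
    (fun s ↦ (sum_slotShare_col x s).trans_le (slotFill_le_one _ _)) fun j s ↦ d s.1 j
  refine ⟨f, fun i k hk ↦ hf_full _ ((sum_slotShare_col x _).trans (slotFill_eq_one hk)), ?_⟩
  calc ∑ j, d (f j).1 j ≤ ∑ j, ∑ s : Slot x, d s.1 j * slotShare x j s := hf_cost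
    _ = ∑ j, ∑ i, d i j * x i j :=
        sum_congr rfl fun j _ ↦ sum_mul_slotShare_row hx (fun i ↦ d i j) j
    _ = ∑ i, ∑ j, d i j * x i j := sum_comm

end SlotShare

theorem integral_assignment_rounding_general {R F C : Type*} [Field R] [LinearOrder R]
    [IsStrictOrderedRing R] [FloorRing R] [Fintype F] [Fintype C] [DecidableEq F]
    (d : F → C → R) {x : F → C → R} (hx : ∀ i j, 0 ≤ x i j) (hx_sum : ∀ j, ∑ i, x i j = 1) :
    ∃ σ : C → F,
      (∀ i, ⌊∑ j, x i j⌋ ≤ (#{j | σ j = i} : ℤ) ∧ (#{j | σ j = i} : ℤ) ≤ ⌈∑ j, x i j⌉) ∧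
      ∑ j, d (σ j) j ≤ ∑ i, ∑ j, d i j * x i j := by
  obtain ⟨f, hf_full, hf_cost⟩ := exists_embedding_slot_sum_le hx hx_sum d
  refine ⟨fun j ↦ (f j).1, fun i ↦ ⟨?_, ?_⟩, hf_cost⟩
  · have full (k : Fin ⌊load x i⌋₊) : ((k + 1 : ℕ) : R) ≤ load x i :=
      (Nat.le_floor_iff (load_nonneg hx i)).1 k.is_lt
    have floor_le := card_le_card_filter_fst_eq f (Fin.castLEEmb (Nat.floor_le_ceil (load x i)))
      fun k ↦ hf_full i _ (full k)
    rw [Fintype.card_fin] at floor_le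
    rw [← load, ← Int.natCast_floor_eq_floor (load_nonneg hx i)]
    exact_mod_cast floor_le
  · have le_ceil := card_filter_fst_eq_le f i
    rw [Fintype.card_fin] at le_ceil
    rw [← load, ← Int.natCast_ceil_eq_ceil (load_nonneg hx i)]
    exact_mod_cast le_ceil

/-- Integrality of min-cost flow: a fractional assignment `x` of unit client
demands to facilities can be rounded to an integral assignment `σ` whose loads lie between the
floor and the ceiling of the fractional loads, without increasing the connection cost. -/
theorem integral_assignment_rounding
    (F C : Type) [Fintype F] [Fintype C] [DecidableEq F]
    (d : F → C → ℝ) (hd : ∀ i j, 0 ≤ d i j)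
    (x : F → C → ℝ) (hx0 : ∀ i j, 0 ≤ x i j)
    (hx1 : ∀ j : C, ∑ i, x i j = 1) :
    ∃ σ : C → F,
      (∀ i : F,
        ⌊∑ j, x i j⌋ ≤ ((univ.filter (fun j : C => σ j = i)).card : ℤ) ∧
        ((univ.filter (fun j : C => σ j = i)).card : ℤ) ≤ ⌈∑ j, x i j⌉) ∧
      (∑ j, d (σ j) j) ≤ ∑ i, ∑ j, d i j * x i j :=
  integral_assignment_rounding_general d hx0 hx1
end

section
/- Let X be a metric space, F ⊆ X a finite set of facilities, C ⊆ X a finite set of clients, f : F → ℝ with f i ≥ 0, and L, U ∈ ℕ with 0 < L ≤ U. Let σᵗ : C → F be any assignment and let Fᵗ = σᵗ(C) be its image. Define modified opening costs f¹ i = 0 if i ∈ Fᵗ and f¹ i = f i otherwise. Suppose (F*, σ*) is a feasible solution of the original instance, i.e., F* ⊆ F, σ* : C → F*, and L ≤ |σ*⁻¹(i)| ≤ U for every i ∈ F*. Then there exist F'' ⊆ F and σ'' : C → F'' with L ≤ |σ''⁻¹(i)| ≤ U for every i ∈ F'' such that Σ_{i∈F''} f¹ i + Σ_{j∈C} dist(σᵗ(j),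 σ''(j)) ≤ (Σ_{i∈Fᵗ} f i + Σ_{j∈C} dist(j, σᵗ(j))) + (Σ_{i∈F*} f i + Σ_{j∈C} dist(j, σ*(j))). -/
open Finset

/-- The cost of a facility location solution that opens the facilities `S` and assigns each
client `j ∈ C` to `σ j`: opening costs plus connection costs. Clients are indexed by `ι` and
located by `p : ι → X`, so that moving them changes only `p`. -/
noncomputable def facilityLocationCost {ι X : Type*} [PseudoMetricSpace X] (f : X → ℝ)
    (C : Finset ι) (p : ι → X) (S : Finset X) (σ : ι → X) : ℝ :=
  ∑ i ∈ S, f i + ∑ j ∈ C, dist (p j) (σ j)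

namespace facilityLocationCost

variable {ι X : Type*} [PseudoMetricSpace X] {f g : X → ℝ} {S : Finset X}

theorem mono_openingCost (hgf : ∀ i ∈ S, g i ≤ f i) (C : Finset ι) (p σ : ι → X) :
    facilityLocationCost g C p S σ ≤ facilityLocationCost f C p S σ :=
  add_le_add_left (sum_le_sum hgf) _

theorem sum_dist_le (hf : ∀ i ∈ S, 0 ≤ f i) (C : Finset ι) (p σ : ι → X) :
    ∑ j ∈ C, dist (p j) (σ j) ≤ facilityLocationCost f C p S σ :=
  le_add_of_nonneg_left (sum_nonneg hf)

theorem le_sum_dist_add (f : X → ℝ) (S : Finset X) (C : Finset ι) (p q σ : ι → X) :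
    facilityLocationCost f C q S σ ≤
      ∑ j ∈ C, dist (p j) (q j) + facilityLocationCost f C p S σ := by
  have connection_le : ∑ j ∈ C, dist (q j) (σ j) ≤
      ∑ j ∈ C, dist (p j) (q j) + ∑ j ∈ C, dist (p j) (σ j) := by
    rw [← sum_add_distrib]
    exact sum_le_sum fun j _ => dist_triangle_left (q j) (σ j) (p j)
  unfold facilityLocationCost
  linarith

end facilityLocationCost

open facilityLocationCost in
theorem instance_I1_opt_bound_general {ι X : Type*} [PseudoMetricSpace X] [DecidableEq X]
    {f : X → ℝ} {C : Finset ι} {S : Finset X} {τ : ι → X}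
    (hτ : ∀ j ∈ C, 0 ≤ f (τ j)) (hS : ∀ i ∈ S, 0 ≤ f i) (p σ : ι → X) :
    facilityLocationCost (fun i => if i ∈ C.image τ then 0 else f i) C τ S σ ≤
      facilityLocationCost f C p (C.image τ) τ + facilityLocationCost f C p S σ := by
  have opening_le : ∀ i ∈ S, (if i ∈ C.image τ then 0 else f i) ≤ f i := fun i hi => by
    split_ifs
    exacts [hS i hi, le_rfl]
  calc facilityLocationCost (fun i => if i ∈ C.image τ then 0 else f i) C τ S σ
    _ ≤ facilityLocationCost f C τ S σ := mono_openingCost opening_le C τ σ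
    _ ≤ ∑ j ∈ C, dist (p j) (τ j) + facilityLocationCost f C p S σ :=
      le_sum_dist_add f S C p τ σ
    _ ≤ facilityLocationCost f C p (C.image τ) τ + facilityLocationCost f C p S σ := by
      gcongr
      exact sum_dist_le (forall_mem_image.2 hτ) C p τ

/-- Bounding the optimum of instance `I₁` (clients moved to the facilities
serving them in the tri-criteria solution `σᵗ`, opening costs zeroed on `Fᵗ = σᵗ(C)`): any
feasible solution `(F*, σ*)` of the original instance yields a feasible solution of `I₁` of
cost at most `Cost_I(Sᵗ) + Cost_I(F*, σ*)`. -/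
theorem instance_I1_opt_bound
    (X : Type) [MetricSpace X] [DecidableEq X]
    (F C : Finset X) (f : X → ℝ) (L U : ℕ)
    (hf : ∀ i ∈ F, 0 ≤ f i) (hL : 0 < L) (hLU : L ≤ U)
    (σt : X → X) (hσt : ∀ j ∈ C, σt j ∈ F)
    (Fstar : Finset X) (σstar : X → X)
    (hFstar : Fstar ⊆ F) (hσstar : ∀ j ∈ C, σstar j ∈ Fstar)
    (hfeas : ∀ i ∈ Fstar, L ≤ (C.filter (fun j => σstar j = i)).card ∧
      (C.filter (fun j => σstar j = i)).card ≤ U) :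
    ∃ (F'' : Finset X) (σ'' : X → X), F'' ⊆ F ∧ (∀ j ∈ C, σ'' j ∈ F'') ∧
      (∀ i ∈ F'', L ≤ (C.filter (fun j => σ'' j = i)).card ∧
        (C.filter (fun j => σ'' j = i)).card ≤ U) ∧
      (∑ i ∈ F'', (if i ∈ C.image σt then (0 : ℝ) else f i)) +
          (∑ j ∈ C, dist (σt j) (σ'' j)) ≤
        ((∑ i ∈ C.image σt, f i) + ∑ j ∈ C, dist j (σt j)) +
        ((∑ i ∈ Fstar, f i) + ∑ j ∈ C, dist j (σstar j)) := by
  exact ⟨Fstar, σstar, hFstar, hσstar, hfeas, instance_I1_opt_bound_general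
    (fun j hj => hf _ (hσt j hj)) (fun i hi => hf i (hFstar hi)) id σstar⟩
end
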